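/- Let $n\geq 1$, $s\in(0,1)$, $k\in\mathbb{N}$, $\varepsilon>0$, and let $\sigma\in C^k(\overline{B_1}\times[-1,1],(0,+\infty))$ be a positive function on $\overline{B_1}\times[-1,1]\subset\mathbb{R}^{n+1}$. Then there exist functions $u_\varepsilon,\sigma_\varepsilon\in C^\infty(B_1\times(-1,1),(0,+\infty))\cap C(\mathbb{R}^{n+1})$, compactly supported in $\mathbb{R}^{n+1}$, such that: (1) $\partial_t u_\varepsilon+(-\Delta)^s u_\varepsilon=(\sigma_\varepsilon-u_\varepsilon)u_\varepsilon$ in $B_1\times(-1,1)$; (2) $u_\varepsilon=\sigma_\varepsilon$ in $B_1\times(-1,1)$; (3) $\|\sigma-\sigma_\varepsilon\|_{C^k(B_1\times(-1,1))}\leq\varepsilon$. -/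

import Mathlib

open MeasureTheory Filter Metric Set

/-- The normalizing constant `C(n,s)` of the fractional Laplacian. -/
noncomputable def fracC (n : ℕ) (s : ℝ) : ℝ :=
  4 ^ s * s * Real.Gamma ((n : ℝ) / 2 + s) / (Real.pi ^ ((n : ℝ) / 2) * Real.Gamma (1 - s))

/-- `HasFracLap n s u x L` : the principal value limit defining `(-Δ)^s u (x)`
exists and equals `L`. -/
def HasFracLap (n : ℕ) (s : ℝ) (u : EuclideanSpace ℝ (Fin n) → ℝ)
    (x : EuclideanSpace ℝ (Fin n)) (L : ℝ) : Prop :=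
  Tendsto (fun ρ : ℝ =>
      fracC n s * ∫ y in {y : EuclideanSpace ℝ (Fin n) | ρ ≤ ‖y‖},
        (u x - u (x + y)) / ‖y‖ ^ ((n : ℝ) + 2 * s))
    (nhdsWithin 0 (Set.Ioi 0)) (nhds L)

/-!
With `u = σ_ε` the reaction term vanishes, so it suffices to approximate `σ` in `C^k` by compactly
supported smooth solutions of the fractional heat equation, written here as `levyOp ν b U = 0` where
`ν` is the jump measure and `b` the time direction.

Mollifying, it is enough to approximate in `L²(Ω)` for a larger ball `Ω`. Compactly supported weak
solutions are dense there: jumps longer than the diameter of `Ω` make the operator coercive on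
`L²(Ω)`, so the Dirichlet problem in `Ω` is solvable for every exterior datum, and by duality an
`h ∈ L²(Ω)` orthogonal to all solutions yields a `ψ`, supported in `Ω`, whose image under the
adjoint operator is `h` in `Ω` and zero outside. Unique continuation forces `ψ = 0`, hence `h = 0`.

For the fractional heat operator, that image vanishes outside `Ω` only if the Riesz potentials of
`ψ exp (τ t)` vanish far away. Applying powers of the Laplacian raises their exponent, and passing
to the limit in the Kelvin transform turns the kernels into exponentials: `ψ` is orthogonal to all
`exp (⟪η, x⟫ + τ t)`. The Laplace transform being injective, `ψ = 0`.
-/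

namespace FractionalHeat

open ContinuousLinearMap (lsmul)
open scoped ContDiff Convolution InnerProductSpace Topology

section Approximation

variable {E F : Type*} [NormedAddCommGroup E] [NormedSpace ℝ E] [NormedAddCommGroup F]
  [NormedSpace ℝ F]

theorem iteratedFDeriv_comp_const_smul_of_isOpen {f : E → F} {s : Set E} {i : ℕ}
    (hs : IsOpen s) (hf : ContDiffOn ℝ i f s) (l : ℝ) {p : E} (hp : l • p ∈ s) :
    iteratedFDeriv ℝ i (fun q => f (l • q)) p = l ^ i • iteratedFDeriv ℝ i f (l • p) := by
  set L : E →L[ℝ] E := l • ContinuousLinearMap.id ℝ E with hL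
  have hLs : IsOpen (L ⁻¹' s) := hs.preimage L.continuous
  have hpL : p ∈ L ⁻¹' s := by simpa [hL] using hp
  have h := L.iteratedFDerivWithin_comp_right hf hs.uniqueDiffOn hLs.uniqueDiffOn hpL le_rfl
  rw [iteratedFDerivWithin_of_isOpen i hLs hpL, iteratedFDerivWithin_of_isOpen i hs hpL] at h
  refine h.trans (ContinuousMultilinearMap.ext fun m => ?_)
  simpa [hL] using (iteratedFDeriv ℝ i f (l • p)).map_smul_univ (fun _ => l) m

theorem smul_mem_ball_one {l : ℝ} (hl : l ∈ Ioc (0 : ℝ) 1) {p : E} (hp : p ∈ ball (0 : E) l⁻¹) :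
    l • p ∈ ball (0 : E) 1 := by
  rw [mem_ball_zero_iff] at hp ⊢
  rw [norm_smul, Real.norm_of_nonneg hl.1.le]
  exact (lt_inv_mul_iff₀ hl.1).1 (by simpa using hp)

theorem eventually_norm_sub_pow_smul_comp_smul_le [FiniteDimensional ℝ E] {D : E → F}
    (hD : ContinuousOn D (closedBall 0 1)) (i : ℕ) {ε : ℝ} (hε : 0 < ε) :
    ∀ᶠ l in 𝓝[<] (1 : ℝ), ∀ p ∈ closedBall (0 : E) 1, ‖D p - l ^ i • D (l • p)‖ ≤ ε := by
  have hcont : ContinuousOn (Function.uncurry fun (l : ℝ) p => l ^ i • D (l • p))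
      (Icc 0 1 ×ˢ closedBall 0 1) := by
    refine (continuous_fst.pow i).continuousOn.smul (hD.comp continuous_smul.continuousOn ?_)
    rintro ⟨l, p⟩ ⟨hl, hp⟩
    rw [mem_closedBall_zero_iff] at hp ⊢
    rw [norm_smul, Real.norm_of_nonneg hl.1]
    exact mul_le_one₀ hl.2 (norm_nonneg p) hp
  obtain ⟨v, hv, hclose⟩ := (isCompact_closedBall (0 : E) 1).mem_uniformity_of_prod hcont
    (right_mem_Icc.2 zero_le_one) (dist_mem_uniformity hε)
  filter_upwards [nhdsWithin_le_of_mem (Icc_mem_nhdsLT zero_lt_one) hv] with l hl p hp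
  have h : dist (l ^ i • D (l • p)) ((1 : ℝ) ^ i • D ((1 : ℝ) • p)) < ε := hclose l hl p hp
  rw [one_pow, one_smul, one_smul, dist_comm, dist_eq_norm] at h
  exact h.le

theorem exists_dilation_near [FiniteDimensional ℝ E] {k : ℕ} {σ : E → F}
    (hσ : ContDiffOn ℝ k σ (closedBall 0 1)) {ε : ℝ} (hε : 0 < ε) :
    ∃ l ∈ Ioo (0 : ℝ) 1, ∀ i ≤ k, ∀ p ∈ ball (0 : E) 1,
      ‖iteratedFDeriv ℝ i (fun q => σ q - σ (l • q)) p‖ ≤ ε := by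
  have huniq : UniqueDiffOn ℝ (closedBall (0 : E) 1) :=
    uniqueDiffOn_convex (convex_closedBall _ _)
      ⟨0, ball_subset_interior_closedBall (mem_ball_self one_pos)⟩
  have hσb : ContDiffOn ℝ k σ (ball 0 1) := hσ.mono ball_subset_closedBall
  have hat : ∀ i ≤ k, ∀ p ∈ ball (0 : E) 1, ContDiffAt ℝ i σ p := fun i hi p hp =>
    (hσb.contDiffAt (isOpen_ball.mem_nhds hp)).of_le (by exact_mod_cast hi)
  have hclose : ∀ᶠ l in 𝓝[<] (1 : ℝ), ∀ i ∈ Iic k, ∀ p ∈ closedBall (0 : E) 1,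
      ‖iteratedFDerivWithin ℝ i σ (closedBall 0 1) p -
        l ^ i • iteratedFDerivWithin ℝ i σ (closedBall 0 1) (l • p)‖ ≤ ε :=
    (eventually_all_finite (finite_Iic k)).2 fun i hi =>
      eventually_norm_sub_pow_smul_comp_smul_le
        (hσ.continuousOn_iteratedFDerivWithin (by exact_mod_cast hi) huniq) i hε
  obtain ⟨l, hlclose, hl⟩ := (hclose.and (Ioo_mem_nhdsLT zero_lt_one)).exists
  refine ⟨l, hl, fun i hi p hp => ?_⟩
  have hlp : l • p ∈ ball (0 : E) 1 := smul_mem_ball_one ⟨hl.1, hl.2.le⟩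
    (ball_subset_ball ((one_lt_inv₀ hl.1).2 hl.2).le hp)
  have h := hlclose i hi p (ball_subset_closedBall hp)
  rw [iteratedFDerivWithin_eq_iteratedFDeriv huniq (hat i hi p hp) (ball_subset_closedBall hp),
    iteratedFDerivWithin_eq_iteratedFDeriv huniq (hat i hi _ hlp) (ball_subset_closedBall hlp)] at h
  have hσl : ContDiffAt ℝ i (fun q => σ (l • q)) p :=
    (hat i hi _ hlp).comp p (contDiffAt_id.const_smul l)
  rwa [fun_iteratedFDeriv_sub_apply (hat i hi p hp) hσl,
    iteratedFDeriv_comp_const_smul_of_isOpen isOpen_ball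
      (hσb.of_le (by exact_mod_cast hi)) l hlp]

theorem exists_contDiff_eqOn_ball [FiniteDimensional ℝ E] {k : ℕ∞} {f : E → F} {r R : ℝ}
    (hr : 0 < r) (hrR : r < R) (hf : ContDiffOn ℝ k f (ball 0 R)) :
    ∃ g : E → F, ContDiff ℝ k g ∧ HasCompactSupport g ∧ EqOn g f (ball 0 r) := by
  obtain ⟨r', hr', hr'R⟩ := exists_between hrR
  let χ : ContDiffBump (0 : E) := ⟨r, r', hr, hr'⟩
  refine ⟨fun p => χ p • f p, contDiff_iff_contDiffAt.2 fun p => ?_,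
    χ.hasCompactSupport.smul_right, fun p hp => ?_⟩
  · by_cases hp : p ∈ tsupport χ
    · rw [χ.tsupport_eq] at hp
      exact χ.contDiffAt.smul
        (hf.contDiffAt (isOpen_ball.mem_nhds (closedBall_subset_ball hr'R hp)))
    · refine (contDiffAt_const (c := (0 : F))).congr_of_eventuallyEq ?_
      filter_upwards [(isClosed_tsupport χ).isOpen_compl.mem_nhds hp] with q hq
      rw [image_eq_zero_of_notMem_tsupport hq, zero_smul]
  · simp only [χ.one_of_mem_closedBall (ball_subset_closedBall hp), one_smul]

theorem exists_contDiff_near [FiniteDimensional ℝ E] {k : ℕ} {σ : E → F}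
    (hσ : ContDiffOn ℝ k σ (closedBall 0 1)) {ε : ℝ} (hε : 0 < ε) :
    ∃ g : E → F, ContDiff ℝ k g ∧ HasCompactSupport g ∧
      ∀ i ≤ k, ∀ p ∈ ball (0 : E) 1, ‖iteratedFDeriv ℝ i (fun q => σ q - g q) p‖ ≤ ε := by
  obtain ⟨l, hl, hclose⟩ := exists_dilation_near hσ hε
  obtain ⟨g, hg, hcg, hgσ⟩ := exists_contDiff_eqOn_ball (k := k) one_pos
    ((one_lt_inv₀ hl.1).2 hl.2) ((hσ.mono ball_subset_closedBall).comp
      (contDiff_id.const_smul l).contDiffOn fun p hp => smul_mem_ball_one ⟨hl.1, hl.2.le⟩ hp)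
  refine ⟨g, hg, hcg, fun i hi p hp => ?_⟩
  have hloc : (fun q => σ q - g q) =ᶠ[𝓝 p] fun q => σ q - σ (l • q) := by
    filter_upwards [isOpen_ball.mem_nhds hp] with q hq
    rw [hgσ hq]
    rfl
  rw [(hloc.iteratedFDeriv ℝ i).eq_of_nhds]
  exact hclose i hi p hp

end Approximation

section Convolution

variable {G F : Type*} [MeasurableSpace G] {μ : Measure G} [NormedAddCommGroup F] [NormedSpace ℝ F]

theorem norm_convolution_lsmul_le_mul_setIntegral [AddGroup G] {f : G → ℝ} {g : G → F} {s : Set G}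
    {p : G} (hf : IntegrableOn f s μ) {M : ℝ} (hM : ∀ z, ‖g z‖ ≤ M)
    (hg : ∀ z ∉ s, g (p - z) = 0) :
    ‖(f ⋆[lsmul ℝ ℝ, μ] g) p‖ ≤ M * ∫ z in s, |f z| ∂μ := by
  rw [convolution_lsmul, ← integral_const_mul,
    ← setIntegral_eq_integral_of_forall_compl_eq_zero fun z hz => by rw [hg z hz, smul_zero]]
  refine (norm_integral_le_integral_norm _).trans ?_
  refine integral_mono_of_nonneg (.of_forall fun z => norm_nonneg _) (hf.abs.const_mul M)
    (.of_forall fun z => ?_)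
  simp only [norm_smul, Real.norm_eq_abs]
  rw [mul_comm]
  exact mul_le_mul_of_nonneg_right (hM _) (abs_nonneg _)

theorem map_convolution_lsmul [AddGroup G] {F' : Type*} [NormedAddCommGroup F'] [NormedSpace ℝ F']
    (e : F ≃ₗᵢ[ℝ] F') {f : G → ℝ} {g : G → F} (p : G) :
    e ((f ⋆[lsmul ℝ ℝ, μ] g) p) = (f ⋆[lsmul ℝ ℝ, μ] (e ∘ g)) p := by
  simp only [convolution_lsmul, Function.comp_apply, ← map_smul]
  exact (e.toContinuousLinearEquiv.integral_comp_comm fun z => f z • g (p - z)).symm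

variable [NormedAddCommGroup G] [NormedSpace ℝ G] [BorelSpace G]

theorem hasFDerivAt_convolution_lsmul [μ.IsAddLeftInvariant] [SFinite μ]
    {f : G → ℝ} {g : G → F} (hf : LocallyIntegrable f μ) (hcg : HasCompactSupport g)
    (hg : ContDiff ℝ 1 g) (p : G) :
    HasFDerivAt (f ⋆[lsmul ℝ ℝ, μ] g) ((f ⋆[lsmul ℝ ℝ, μ] fderiv ℝ g) p) p :=
  hcg.hasFDerivAt_convolution_right (lsmul ℝ ℝ) hf hg p

theorem iteratedFDeriv_convolution_lsmul [μ.IsAddLeftInvariant] [SFinite μ]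
    {f : G → ℝ} {g : G → F} (hf : LocallyIntegrable f μ) (hcg : HasCompactSupport g) {i : ℕ}
    (hg : ContDiff ℝ i g) :
    iteratedFDeriv ℝ i (f ⋆[lsmul ℝ ℝ, μ] g) = f ⋆[lsmul ℝ ℝ, μ] iteratedFDeriv ℝ i g := by
  induction i with
  | zero =>
    ext1 p
    exact map_convolution_lsmul (continuousMultilinearCurryFin0 ℝ G F).symm p
  | succ i ih =>
    ext1 p
    have hgi : ContDiff ℝ 1 (iteratedFDeriv ℝ i g) := hg.iteratedFDeriv_right (by norm_cast; omega)
    rw [iteratedFDeriv_succ_eq_comp_left, Function.comp_apply,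
      ih (hg.of_le (by exact_mod_cast i.le_succ)),
      (hasFDerivAt_convolution_lsmul hf (hcg.iteratedFDeriv i) hgi p).fderiv]
    exact map_convolution_lsmul (F := G →L[ℝ] G [×i]→L[ℝ] F) (F' := G [×i + 1]→L[ℝ] F)
      (continuousMultilinearCurryLeftEquiv ℝ (fun _ : Fin (i + 1) => G) F).symm p

theorem exists_normed_bump_convolution_near [FiniteDimensional ℝ G] [μ.IsAddHaarMeasure]
    [CompleteSpace F] {g : G → F} {k : ℕ} (hg : ContDiff ℝ k g)
    (hcg : HasCompactSupport g) {δ : ℝ} (hδ : 0 < δ) {ε : ℝ} (hε : 0 < ε) :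
    ∃ χ : ContDiffBump (0 : G), χ.rOut ≤ δ ∧ ∀ i ≤ k, ∀ p,
      ‖iteratedFDeriv ℝ i g p - iteratedFDeriv ℝ i (χ.normed μ ⋆[lsmul ℝ ℝ, μ] g) p‖ ≤ ε := by
  have hgi : ∀ i ≤ k, Continuous (iteratedFDeriv ℝ i g) := fun i hi =>
    hg.continuous_iteratedFDeriv (by exact_mod_cast hi)
  have hunif : ∀ᶠ r in 𝓝[>] (0 : ℝ), ∀ i ∈ Iic k, ∀ p q : G, dist p q < r →
      dist (iteratedFDeriv ℝ i g p) (iteratedFDeriv ℝ i g q) < ε := by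
    refine (eventually_all_finite (finite_Iic k)).2 fun i hi => ?_
    obtain ⟨r₀, hr₀, h⟩ := Metric.uniformContinuous_iff.1
      ((hcg.iteratedFDeriv (𝕜 := ℝ) i).uniformContinuous_of_continuous (hgi i hi)) ε hε
    filter_upwards [Ioo_mem_nhdsGT hr₀] with r hr p q hpq
    exact h (hpq.trans hr.2)
  obtain ⟨r, hr, hrpos, hrδ⟩ := (hunif.and (Ioo_mem_nhdsGT hδ)).exists
  let χ : ContDiffBump (0 : G) := ⟨r / 2, r, half_pos hrpos, half_lt_self hrpos⟩
  refine ⟨χ, hrδ.le, fun i hi p => ?_⟩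
  rw [iteratedFDeriv_convolution_lsmul χ.continuous_normed.locallyIntegrable hcg
    (hg.of_le (by exact_mod_cast hi)), ← dist_eq_norm, dist_comm]
  exact χ.dist_normed_convolution_le (hgi i hi).aestronglyMeasurable
    fun q hq => (hr i hi q p hq).le

end Convolution

/-- Smooth compactly supported functions. -/
structure IsTest {G : Type*} [NormedAddCommGroup G] [NormedSpace ℝ G] (φ : G → ℝ) : Prop where
  contDiff : ContDiff ℝ ∞ φ
  hasCompactSupport : HasCompactSupport φ

/-- The symmetric second difference of `φ` at `p` with increment `v`, positive at maxima. -/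
def secondDiff {G : Type*} [AddGroup G] (φ : G → ℝ) (p v : G) : ℝ :=
  2 * φ p - φ (p + v) - φ (p - v)

section TestFunctions

variable {G : Type*} [NormedAddCommGroup G]

theorem continuous_secondDiff {φ : G → ℝ} (hφ : Continuous φ) :
    Continuous fun q : G × G => secondDiff φ q.1 q.2 := by
  unfold secondDiff
  fun_prop

variable [NormedSpace ℝ G] {φ ψ : G → ℝ}

namespace IsTest

theorem continuous (hφ : IsTest φ) : Continuous φ := hφ.contDiff.continuous

theorem differentiable (hφ : IsTest φ) : Differentiable ℝ φ := hφ.contDiff.differentiable (by simp)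

theorem continuous_fderiv_apply (hφ : IsTest φ) (b : G) : Continuous fun p => fderiv ℝ φ p b :=
  (hφ.contDiff.continuous_fderiv (by simp)).clm_apply continuous_const

theorem comp_const_sub (hφ : IsTest φ) (p : G) : IsTest fun z => φ (p - z) :=
  ⟨hφ.contDiff.comp (contDiff_const.sub contDiff_id),
    hφ.hasCompactSupport.comp_homeomorph (Homeomorph.subLeft p)⟩

theorem integrable [MeasurableSpace G] [OpensMeasurableSpace G] {μ : Measure G}
    [IsFiniteMeasureOnCompacts μ] (hφ : IsTest φ) : Integrable φ μ :=
  hφ.continuous.integrable_of_hasCompactSupport hφ.hasCompactSupport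

theorem integrable_mul [MeasurableSpace G] [OpensMeasurableSpace G] {μ : Measure G}
    [IsFiniteMeasureOnCompacts μ] (hφ : IsTest φ) {f : G → ℝ} (hf : Continuous f) :
    Integrable (fun z => φ z * f z) μ :=
  (hφ.continuous.mul hf).integrable_of_hasCompactSupport hφ.hasCompactSupport.mul_right

theorem exists_norm_sub_sub_fderiv_le (hφ : IsTest φ) :
    ∃ K : ℝ, ∀ p v, ‖φ (p + v) - φ p - fderiv ℝ φ p v‖ ≤ K * ‖v‖ ^ 2 := by
  have hd : ContDiff ℝ 1 (fderiv ℝ φ) := hφ.contDiff.fderiv_right (by norm_cast)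
  obtain ⟨K, hK⟩ :=
    hd.lipschitzWith_of_hasCompactSupport (hφ.hasCompactSupport.fderiv ℝ) one_ne_zero
  refine ⟨K, fun p v => ?_⟩
  have h := (convex_closedBall p ‖v‖).norm_image_sub_le_of_norm_fderiv_le' (𝕜 := ℝ)
    (f := φ) (φ := fderiv ℝ φ p) (x := p) (y := p + v) (C := K * ‖v‖)
    (fun x _ => hφ.differentiable x) (fun x hx => ?_) (by simp) (by simp)
  · rw [add_sub_cancel_left] at h
    exact h.trans_eq (by ring)
  · rw [← dist_eq_norm]
    exact (hK.dist_le_mul x p).trans (mul_le_mul_of_nonneg_left (mem_closedBall.1 hx) K.2)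

theorem exists_abs_secondDiff_le (hφ : IsTest φ) :
    ∃ M : ℝ, ∀ p v, |secondDiff φ p v| ≤ M * min (‖v‖ ^ 2) 1 := by
  obtain ⟨A, hA⟩ := hφ.hasCompactSupport.exists_bound_of_continuous hφ.continuous
  obtain ⟨K, hK⟩ := hφ.exists_norm_sub_sub_fderiv_le
  have hsmall : ∀ p v, |secondDiff φ p v| ≤ 2 * K * ‖v‖ ^ 2 := fun p v => by
    have h := norm_add_le (φ (p + v) - φ p - fderiv ℝ φ p v)
      (φ (p + -v) - φ p - fderiv ℝ φ p (-v))
    have h₁ := hK p v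
    have h₂ := hK p (-v)
    rw [map_neg, ← sub_eq_add_neg, Real.norm_eq_abs, ← abs_neg] at h
    rw [norm_neg, map_neg, ← sub_eq_add_neg] at h₂
    calc |secondDiff φ p v|
        = |-(φ (p + v) - φ p - fderiv ℝ φ p v + (φ (p - v) - φ p - -fderiv ℝ φ p v))| := by
          rw [secondDiff]; congr 1; ring
      _ ≤ 2 * K * ‖v‖ ^ 2 := by linarith
  have hlarge : ∀ p v, |secondDiff φ p v| ≤ 4 * A := fun p v => by
    have h := abs_sub (2 * φ p - φ (p + v)) (φ (p - v))
    have h' := abs_sub (2 * φ p) (φ (p + v))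
    rw [abs_mul, abs_two] at h'
    have h₀ := hA p
    have h₁ := hA (p + v)
    have h₂ := hA (p - v)
    simp only [Real.norm_eq_abs] at h₀ h₁ h₂
    rw [secondDiff]
    linarith
  refine ⟨max (2 * K) (4 * A), fun p v => ?_⟩
  rcases min_choice (‖v‖ ^ 2) 1 with h | h
  · rw [h]
    exact (hsmall p v).trans (by gcongr; exact le_max_left _ _)
  · rw [h, mul_one]
    exact (hlarge p v).trans (le_max_right _ _)

end IsTest

/-- The test functions vanishing off `Ω`. -/
def testFunctionsOn (Ω : Set G) : Submodule ℝ (G → ℝ) where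
  carrier := {φ | IsTest φ ∧ ∀ p ∉ Ω, φ p = 0}
  add_mem' h₁ h₂ := ⟨⟨h₁.1.contDiff.add h₂.1.contDiff,
    h₁.1.hasCompactSupport.add h₂.1.hasCompactSupport⟩,
    fun p hp => by simp only [Pi.add_apply, h₁.2 p hp, h₂.2 p hp, add_zero]⟩
  zero_mem' := ⟨⟨contDiff_const, HasCompactSupport.zero⟩, fun _ _ => rfl⟩
  smul_mem' r _ h := ⟨⟨h.1.contDiff.const_smul r, h.1.hasCompactSupport.smul_left⟩,
    fun p hp => by simp only [Pi.smul_apply, h.2 p hp, smul_zero]⟩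

end TestFunctions

/-- Lévy measures: a jump of size `v` has finite mean `min ‖v‖² 1`. The mass of the origin is left
unconstrained, since it does not enter second differences. -/
def IsLevy {G : Type*} [NormedAddCommGroup G] [MeasurableSpace G] (ν : Measure G) : Prop :=
  Integrable (fun v => min (‖v‖ ^ 2) 1) ν

/-- The (positive) generator with jump measure `ν` and drift `b`, in its absolutely convergent form.
The fractional heat operator is obtained for a multiple of `‖y‖ ^ (-n - 2 * s) dy` carried by the
spatial directions and `b` the unit vector of the time axis. -/
noncomputable def levyOp {G : Type*} [NormedAddCommGroup G] [NormedSpace ℝ G] [MeasurableSpace G]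
    (ν : Measure G) (b : G) (φ : G → ℝ) (p : G) : ℝ :=
  (∫ v, secondDiff φ p v ∂ν) / 2 + fderiv ℝ φ p b

section LevyOperators

variable {G : Type*} [NormedAddCommGroup G] [MeasurableSpace G] {ν : Measure G}

theorem IsLevy.measure_norm_ge_lt_top (hν : IsLevy ν) {R : ℝ} (hR : 0 < R) :
    ν {v : G | R ≤ ‖v‖} < ⊤ := by
  refine (measure_mono fun v (hv : R ≤ ‖v‖) => ?_).trans_lt
    (hν.measure_ge_lt_top (show 0 < min (R ^ 2) 1 by positivity))
  exact min_le_min_right _ (pow_le_pow_left₀ hR.le hv 2)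

theorem integrable_mul_of_hasCompactSupport [OpensMeasurableSpace G] {μ : Measure G}
    {u f : G → ℝ} (hu : Integrable u μ)
    (hf : Continuous f) (hcf : HasCompactSupport f) : Integrable (fun z => u z * f z) μ := by
  obtain ⟨C, hC⟩ := hcf.exists_bound_of_continuous hf
  exact hu.mul_bdd hf.aestronglyMeasurable (.of_forall hC)

theorem integral_mul_translate [BorelSpace G] {μ : Measure G} [μ.IsAddRightInvariant]
    (φ ψ : G → ℝ) (v : G) :
    ∫ z, φ z * ψ (z + v) ∂μ = ∫ z, ψ z * φ (z - v) ∂μ := by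
  rw [← integral_add_right_eq_self (fun z => ψ z * φ (z - v)) v]
  simp only [add_sub_cancel_right, mul_comm]

variable [NormedSpace ℝ G]

theorem levyOp_smul (ν : Measure G) (b : G) (r : ℝ) {φ : G → ℝ} (hφ : IsTest φ) :
    levyOp ν b (r • φ) = r • levyOp ν b φ := by
  ext p
  have hsmul : secondDiff (r • φ) p = fun v => r * secondDiff φ p v := by
    ext v
    simp only [secondDiff, Pi.smul_apply, smul_eq_mul]
    ring
  simp only [levyOp, hsmul, Pi.smul_apply, fderiv_const_smul (hφ.differentiable p), smul_eq_mul,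
    smul_apply, integral_const_mul]
  ring

variable [BorelSpace G] {φ ψ : G → ℝ}

theorem IsTest.integrable_secondDiff (hν : IsLevy ν) (hφ : IsTest φ) (p : G) :
    Integrable (secondDiff φ p) ν := by
  obtain ⟨M, hM⟩ := hφ.exists_abs_secondDiff_le
  exact (hν.const_mul M).mono' ((continuous_secondDiff hφ.continuous).comp
    (Continuous.prodMk_right p)).aestronglyMeasurable (.of_forall (hM p))

theorem IsTest.continuous_levyOp (hν : IsLevy ν) (hφ : IsTest φ) (b : G) :
    Continuous (levyOp ν b φ) := by
  obtain ⟨M, hM⟩ := hφ.exists_abs_secondDiff_le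
  refine (Continuous.div_const (continuous_of_dominated
    (fun p => (hφ.integrable_secondDiff hν p).aestronglyMeasurable)
    (fun p => .of_forall (hM p)) (hν.const_mul M) (.of_forall fun v => ?_)) 2).add
    (hφ.continuous_fderiv_apply b)
  exact (continuous_secondDiff hφ.continuous).comp (Continuous.prodMk_left v)

theorem levyOp_add (hν : IsLevy ν) (b : G) (hφ : IsTest φ) (hψ : IsTest ψ) :
    levyOp ν b (φ + ψ) = levyOp ν b φ + levyOp ν b ψ := by
  ext p
  have hsum : secondDiff (φ + ψ) p = fun v => secondDiff φ p v + secondDiff ψ p v := by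
    ext v
    simp only [secondDiff, Pi.add_apply]
    ring
  simp only [levyOp, hsum, Pi.add_apply, fderiv_add (hφ.differentiable p) (hψ.differentiable p),
    add_apply, integral_add (hφ.integrable_secondDiff hν p) (hψ.integrable_secondDiff hν p)]
  ring

theorem secondDiff_convolution {μ : Measure G} {u : G → ℝ} (hu : Integrable u μ) (hφ : IsTest φ)
    (p v : G) :
    secondDiff (u ⋆[lsmul ℝ ℝ, μ] φ) p v =
      ∫ z, u z * secondDiff (fun z => φ (p - z)) z v ∂μ := by
  have hint : ∀ q, Integrable (fun z => u z * φ (q - z)) μ := fun q =>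
    integrable_mul_of_hasCompactSupport hu (hφ.comp_const_sub q).continuous
      (hφ.comp_const_sub q).hasCompactSupport
  have hint₂ : Integrable (fun z => 2 * (u z * φ (p - z)) - u z * φ (p + v - z)) μ :=
    ((hint p).const_mul 2).sub (hint (p + v))
  simp only [secondDiff, convolution_lsmul, smul_eq_mul]
  rw [← integral_const_mul, ← integral_sub ((hint p).const_mul 2) (hint (p + v)),
    ← integral_sub hint₂ (hint (p - v))]
  congr 1 with z
  rw [show p - (z + v) = p - v - z by abel, show p - (z - v) = p + v - z by abel]
  ring

section Symmetry

variable {μ : Measure G} [μ.IsAddHaarMeasure]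

theorem integral_mul_secondDiff (hφ : IsTest φ) (hψ : Continuous ψ) (v : G) :
    ∫ z, φ z * secondDiff ψ z v ∂μ =
      2 * ∫ z, φ z * ψ z ∂μ - ∫ z, φ z * ψ (z + v) ∂μ - ∫ z, φ z * ψ (z - v) ∂μ := by
  have h₀ : Integrable (fun z => φ z * ψ z) μ := hφ.integrable_mul hψ
  have h₁ : Integrable (fun z => φ z * ψ (z + v)) μ := hφ.integrable_mul (by fun_prop)
  have h₂ : Integrable (fun z => φ z * ψ (z - v)) μ := hφ.integrable_mul (by fun_prop)
  have h₀₁ : Integrable (fun z => 2 * (φ z * ψ z) - φ z * ψ (z + v)) μ := (h₀.const_mul 2).sub h₁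
  rw [← integral_const_mul, ← integral_sub (h₀.const_mul 2) h₁, ← integral_sub h₀₁ h₂]
  congr 1 with z
  simp only [secondDiff]
  ring

theorem integral_mul_secondDiff_comm (hφ : IsTest φ) (hψ : IsTest ψ) (v : G) :
    ∫ z, φ z * secondDiff ψ z v ∂μ = ∫ z, ψ z * secondDiff φ z v ∂μ := by
  rw [integral_mul_secondDiff hφ hψ.continuous, integral_mul_secondDiff hψ hφ.continuous,
    integral_mul_translate φ ψ, integral_mul_translate ψ φ]
  simp only [mul_comm (φ _) (ψ _)]
  ring

theorem integral_mul_translate_le (hφ : IsTest φ) (v : G) :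
    ∫ z, φ z * φ (z + v) ∂μ ≤ ∫ z, φ z * φ z ∂μ := by
  have h₀ : Integrable (fun z => φ z * φ z) μ := hφ.integrable_mul hφ.continuous
  have h₁ : Integrable (fun z => φ (z + v) * φ (z + v)) μ := h₀.comp_add_right v
  have h₂ : Integrable (fun z => φ z * φ (z + v)) μ :=
    hφ.integrable_mul (hφ.continuous.comp (continuous_add_const v))
  have h : ∫ z, 2 * (φ z * φ (z + v)) ∂μ ≤ ∫ z, φ z * φ z + φ (z + v) * φ (z + v) ∂μ :=
    integral_mono (h₂.const_mul 2) (h₀.add h₁)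
      fun z => by dsimp only; nlinarith [two_mul_le_add_sq (φ z) (φ (z + v))]
  rw [integral_const_mul, integral_add h₀ h₁,
    integral_add_right_eq_self (fun z => φ z * φ z) v] at h
  linarith

theorem integral_mul_secondDiff_self_nonneg (hφ : IsTest φ) (v : G) :
    0 ≤ ∫ z, φ z * secondDiff φ z v ∂μ := by
  have h₁ := integral_mul_translate_le (μ := μ) hφ v
  have h₂ := integral_mul_translate_le (μ := μ) hφ (-v)
  simp only [← sub_eq_add_neg] at h₂
  rw [integral_mul_secondDiff hφ hφ.continuous]
  linarith

theorem integral_mul_secondDiff_self_of_far {Ω : Set G} (hφ : IsTest φ)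
    (hΩ : Bornology.IsBounded Ω) (hφΩ : ∀ p ∉ Ω, φ p = 0) {v : G} (hv : diam Ω < ‖v‖) :
    ∫ z, φ z * secondDiff φ z v ∂μ = 2 * ∫ z, φ z * φ z ∂μ := by
  have hfar : ∀ w : G, diam Ω < ‖w‖ → ∀ z, φ z * φ (z + w) = 0 := fun w hw z => by
    by_contra h
    have h' := dist_le_diam_of_mem hΩ (by_contra fun hz => h (by rw [hφΩ (z + w) hz, mul_zero]))
      (by_contra fun hz => h (by rw [hφΩ z hz, zero_mul]))
    rw [dist_self_add_left] at h'
    exact h'.not_gt hw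
  have hfar' := hfar (-v) (by rwa [norm_neg])
  simp only [← sub_eq_add_neg] at hfar'
  rw [integral_mul_secondDiff hφ hφ.continuous]
  simp only [hfar v hv, hfar', integral_zero, sub_zero]

end Symmetry

variable [FiniteDimensional ℝ G] {μ : Measure G}

theorem integrable_mul_secondDiff (hν : IsLevy ν) {u : G → ℝ} (hu : Integrable u μ)
    (hφ : IsTest φ) :
    Integrable (fun q : G × G => u q.1 * secondDiff φ q.1 q.2) (μ.prod ν) := by
  obtain ⟨M, hM⟩ := hφ.exists_abs_secondDiff_le
  refine (hu.norm.mul_prod (hν.const_mul M)).mono' (hu.aestronglyMeasurable.comp_fst.mul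
    (continuous_secondDiff hφ.continuous).aestronglyMeasurable) (.of_forall fun q => ?_)
  rw [norm_mul]
  exact mul_le_mul_of_nonneg_left (hM q.1 q.2) (norm_nonneg _)

theorem integral_mul_levyOp [SFinite ν] [SFinite μ] (hν : IsLevy ν) (b : G) {u : G → ℝ}
    (hu : Integrable u μ) (hφ : IsTest φ) :
    ∫ z, u z * levyOp ν b φ z ∂μ =
      (∫ v, ∫ z, u z * secondDiff φ z v ∂μ ∂ν) / 2 + ∫ z, u z * fderiv ℝ φ z b ∂μ := by
  have hjump := integrable_mul_secondDiff hν hu hφ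
  have hdrift : Integrable (fun z => u z * fderiv ℝ φ z b) μ :=
    integrable_mul_of_hasCompactSupport hu (hφ.continuous_fderiv_apply b)
      (hφ.hasCompactSupport.fderiv_apply ℝ b)
  have hsplit : ∀ z, u z * levyOp ν b φ z =
      (∫ v, u z * secondDiff φ z v ∂ν) / 2 + u z * fderiv ℝ φ z b := fun z => by
    rw [integral_const_mul, levyOp]
    ring
  simp only [hsplit]
  rw [integral_add (hjump.integral_prod_left.div_const 2) hdrift, integral_div,
    integral_integral_swap hjump]

variable [SFinite ν] [μ.IsAddHaarMeasure]

theorem integral_mul_fderiv_eq_neg (hφ : IsTest φ) (hψ : IsTest ψ) (b : G) :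
    ∫ z, φ z * fderiv ℝ ψ z b ∂μ = -∫ z, ψ z * fderiv ℝ φ z b ∂μ := by
  have h := integral_mul_fderiv_eq_neg_fderiv_mul_of_integrable (𝕜 := ℝ) (μ := μ) (v := b)
    ((hψ.integrable_mul (hφ.continuous_fderiv_apply b)).congr
      (.of_forall fun z => mul_comm _ _))
    (hφ.integrable_mul (hψ.continuous_fderiv_apply b)) (hφ.integrable_mul hψ.continuous)
    (fun z _ => hφ.differentiable z) (fun z _ => hψ.differentiable z)
  simpa only [mul_comm] using h

theorem integral_mul_levyOp_eq (hν : IsLevy ν) (b : G) (hφ : IsTest φ) (hψ : IsTest ψ) :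
    ∫ z, φ z * levyOp ν b ψ z ∂μ = ∫ z, ψ z * levyOp ν (-b) φ z ∂μ := by
  rw [integral_mul_levyOp hν b hφ.integrable hψ, integral_mul_levyOp hν (-b) hψ.integrable hφ,
    integral_mul_fderiv_eq_neg hφ hψ]
  simp only [integral_mul_secondDiff_comm hφ hψ, map_neg, mul_neg, integral_neg]

-- Jumps longer than the diameter of `Ω` leave it, and they alone control the `L²` norm.
theorem measureReal_mul_integral_sq_le (hν : IsLevy ν) (b : G) {Ω : Set G}
    (hΩ : Bornology.IsBounded Ω) (hφ : IsTest φ) (hφΩ : ∀ p ∉ Ω, φ p = 0) :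
    ν.real {v | diam Ω < ‖v‖} * ∫ z, φ z * φ z ∂μ ≤ ∫ z, φ z * levyOp ν b φ z ∂μ := by
  have hS : MeasurableSet {v : G | diam Ω < ‖v‖} :=
    measurableSet_lt measurable_const measurable_norm
  have hdrift : ∫ z, φ z * fderiv ℝ φ z b ∂μ = 0 := by
    linarith [integral_mul_fderiv_eq_neg (μ := μ) hφ hφ b]
  have hjump := (integrable_mul_secondDiff hν (μ := μ) hφ.integrable hφ).integral_prod_right
  have hle := setIntegral_le_integral (s := {v : G | diam Ω < ‖v‖}) hjump
    (.of_forall fun v => integral_mul_secondDiff_self_nonneg hφ v)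
  rw [setIntegral_congr_fun hS fun v hv => integral_mul_secondDiff_self_of_far hφ hΩ hφΩ hv,
    setIntegral_const, smul_eq_mul] at hle
  rw [integral_mul_levyOp hν b hφ.integrable hφ, hdrift]
  linarith

theorem fderiv_comp_const_sub_apply {G : Type*} [NormedAddCommGroup G] [NormedSpace ℝ G]
    {φ : G → ℝ} (hφ : Differentiable ℝ φ) (p z b : G) :
    fderiv ℝ (fun z => φ (p - z)) z b = -fderiv ℝ φ (p - z) b := by
  have h : HasFDerivAt (fun z => φ (p - z))
      ((fderiv ℝ φ (p - z)).comp (-ContinuousLinearMap.id ℝ G)) z :=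
    (hφ (p - z)).hasFDerivAt.comp z ((hasFDerivAt_id z).const_sub p)
  simp only [h.fderiv, ContinuousLinearMap.comp_apply, neg_apply, ContinuousLinearMap.id_apply,
    map_neg]

theorem fderiv_convolution_apply {u : G → ℝ} (hu : Integrable u μ) (hφ : IsTest φ) (p b : G) :
    fderiv ℝ (u ⋆[lsmul ℝ ℝ, μ] φ) p b = ∫ z, u z * fderiv ℝ (fun z => φ (p - z)) z (-b) ∂μ := by
  have hC1 : ContDiff ℝ 1 φ := hφ.contDiff.of_le (by norm_cast)
  have hexists : Integrable (fun z => u z • fderiv ℝ φ (p - z)) μ :=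
    (hφ.hasCompactSupport.fderiv ℝ).convolutionExists_right (lsmul ℝ ℝ) hu.locallyIntegrable
      (hC1.continuous_fderiv one_ne_zero) p
  rw [(hasFDerivAt_convolution_lsmul hu.locallyIntegrable hφ.hasCompactSupport hC1 p).fderiv,
    convolution_lsmul, ContinuousLinearMap.integral_apply hexists]
  simp only [fderiv_comp_const_sub_apply hφ.differentiable, map_neg, neg_neg, smul_apply,
    smul_eq_mul]

theorem levyOp_convolution (hν : IsLevy ν) (b : G) {u : G → ℝ} (hu : Integrable u μ)
    (hφ : IsTest φ) (p : G) :
    levyOp ν b (u ⋆[lsmul ℝ ℝ, μ] φ) p = ∫ z, u z * levyOp ν (-b) (fun z => φ (p - z)) z ∂μ := by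
  simp only [levyOp, secondDiff_convolution hu hφ, fderiv_convolution_apply hu hφ]
  exact (integral_mul_levyOp hν (-b) hu (hφ.comp_const_sub p)).symm

end LevyOperators

section Density

theorem exists_continuousLinearMap_comp_eq {V H F : Type*} [AddCommGroup V] [Module ℝ V]
    [NormedAddCommGroup H] [InnerProductSpace ℝ H] [CompleteSpace H] [NormedAddCommGroup F]
    [NormedSpace ℝ F] [CompleteSpace F] (A : V →ₗ[ℝ] H) (j : V →ₗ[ℝ] F) {C : ℝ}
    (hC : ∀ x, ‖j x‖ ≤ C * ‖A x‖) : ∃ B : H →L[ℝ] F, ∀ x, B (A x) = j x := by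
  let K := (LinearMap.range A).topologicalClosure
  have hmem : ∀ x, A x ∈ K := fun x => subset_closure ⟨x, rfl⟩
  have hdense : DenseRange (A.codRestrict K hmem) := by
    refine Subtype.dense_iff.2 fun y hy => ?_
    rwa [← range_comp]
  refine ⟨(j.extendOfNorm (A.codRestrict K hmem)).comp K.orthogonalProjectionOnto, fun x => ?_⟩
  have hproj : K.orthogonalProjectionOnto (A x) = A.codRestrict K hmem x :=
    K.orthogonalProjectionOnto_mem_subspace_eq_self (A.codRestrict K hmem x)
  rw [ContinuousLinearMap.comp_apply, hproj]
  exact LinearMap.extendOfNorm_eq hdense ⟨C, hC⟩ x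

theorem integrable_mul_continuous_of_hasCompactSupport {G : Type*} [NormedAddCommGroup G]
    [MeasurableSpace G] [OpensMeasurableSpace G] {μ : Measure G} {u f : G → ℝ} (hu : Integrable u μ)
    (hcu : HasCompactSupport u) (hf : Continuous f) : Integrable (fun z => u z * f z) μ := by
  rw [← integrableOn_iff_integrable_of_support_subset
    ((Function.support_mul_subset_left u f).trans (subset_tsupport u))]
  exact hu.integrableOn.mul_continuousOn hf.continuousOn hcu

variable {G : Type*} [NormedAddCommGroup G] [NormedSpace ℝ G] [MeasurableSpace G]

/-- Compactly supported solutions of `levyOp ν b u = 0` in `Ω` in the sense of distributions. -/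
structure IsWeakSolution (ν : Measure G) (b : G) (Ω : Set G) (μ : Measure G) (u : G → ℝ) :
    Prop where
  integrable : Integrable u μ
  hasCompactSupport : HasCompactSupport u
  integral_eq_zero : ∀ φ ∈ testFunctionsOn Ω, ∫ z, u z * levyOp ν (-b) φ z ∂μ = 0

/-- Unique continuation for the adjoint of `levyOp ν b`, in weak form: no nonzero `ψ ∈ L²(Ω)`,
extended by zero, has an image under the adjoint that vanishes off `Ω`. -/
def HasUniqueContinuation (ν : Measure G) (b : G) (Ω : Set G) (μ : Measure G) : Prop :=
  ∀ ψ : G → ℝ, MemLp ψ 2 (μ.restrict Ω) →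
    (∀ w, IsTest w → (∀ p ∈ Ω, w p = 0) → ∫ z in Ω, ψ z * levyOp ν b w z ∂μ = 0) →
    ψ =ᵐ[μ.restrict Ω] 0

variable {ν μ : Measure G} {b : G} {Ω : Set G} {u v : G → ℝ}

namespace IsWeakSolution

theorem smul (r : ℝ) (hu : IsWeakSolution ν b Ω μ u) : IsWeakSolution ν b Ω μ (r • u) where
  integrable := hu.integrable.smul r
  hasCompactSupport := hu.hasCompactSupport.smul_left
  integral_eq_zero φ hφ := by
    simp only [Pi.smul_apply, smul_eq_mul, mul_assoc]
    rw [integral_const_mul, hu.integral_eq_zero φ hφ, mul_zero]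

theorem zero : IsWeakSolution ν b Ω μ 0 where
  integrable := integrable_zero _ _ _
  hasCompactSupport := HasCompactSupport.zero
  integral_eq_zero φ _ := by simp only [Pi.zero_apply, zero_mul, integral_zero]

variable [BorelSpace G]

theorem integrable_mul_levyOp (hν : IsLevy ν) (hu : IsWeakSolution ν b Ω μ u) {φ : G → ℝ}
    (hφ : IsTest φ) : Integrable (fun z => u z * levyOp ν (-b) φ z) μ :=
  integrable_mul_continuous_of_hasCompactSupport hu.integrable hu.hasCompactSupport
    (hφ.continuous_levyOp hν (-b))

theorem add (hν : IsLevy ν) (hu : IsWeakSolution ν b Ω μ u) (hv : IsWeakSolution ν b Ω μ v) :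
    IsWeakSolution ν b Ω μ (u + v) where
  integrable := hu.integrable.add hv.integrable
  hasCompactSupport := hu.hasCompactSupport.add hv.hasCompactSupport
  integral_eq_zero φ hφ := by
    simp only [Pi.add_apply, add_mul]
    rw [integral_add (hu.integrable_mul_levyOp hν hφ.1) (hv.integrable_mul_levyOp hν hφ.1),
      hu.integral_eq_zero φ hφ, hv.integral_eq_zero φ hφ, add_zero]

end IsWeakSolution

variable [BorelSpace G]

/-- The elements of `L²(Ω)` that are restrictions of weak solutions. -/
def weakSolutionTraces (hν : IsLevy ν) (b : G) (Ω : Set G) (μ : Measure G) :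
    Submodule ℝ (Lp ℝ 2 (μ.restrict Ω)) where
  carrier := {f | ∃ u, IsWeakSolution ν b Ω μ u ∧ f =ᵐ[μ.restrict Ω] u}
  add_mem' := by
    rintro f g ⟨u, hu, hfu⟩ ⟨v, hv, hgv⟩
    exact ⟨u + v, hu.add hν hv, (Lp.coeFn_add f g).trans (hfu.add hgv)⟩
  zero_mem' := ⟨0, .zero, Lp.coeFn_zero ℝ 2 _⟩
  smul_mem' := by
    rintro r f ⟨u, hu, hfu⟩
    exact ⟨r • u, hu.smul r, (Lp.coeFn_smul r f).trans (hfu.const_smul r)⟩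

variable [FiniteDimensional ℝ G]

theorem memLp_restrict_of_continuous [IsFiniteMeasureOnCompacts μ] (hΩ : Bornology.IsBounded Ω)
    {f : G → ℝ} (hf : Continuous f) : MemLp f 2 (μ.restrict Ω) := by
  have : IsFiniteMeasure (μ.restrict (closure Ω)) :=
    isFiniteMeasure_restrict.2 hΩ.isCompact_closure.measure_ne_top
  obtain ⟨C, hC⟩ := hΩ.isCompact_closure.exists_bound_of_continuousOn hf.continuousOn
  refine (MemLp.of_bound hf.aestronglyMeasurable C ?_).mono_measure
    (Measure.restrict_mono subset_closure le_rfl)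
  filter_upwards [ae_restrict_mem isClosed_closure.measurableSet] with z hz using hC z hz

theorem inner_eq_integral {α : Type*} [MeasurableSpace α] {μ : Measure α} {f g : Lp ℝ 2 μ}
    {φ ψ : α → ℝ} (hf : f =ᵐ[μ] φ) (hg : g =ᵐ[μ] ψ) : ⟪f, g⟫_ℝ = ∫ z, φ z * ψ z ∂μ := by
  rw [L2.inner_def]
  refine integral_congr_ae ?_
  filter_upwards [hf, hg] with z hfz hgz
  rw [hfz, hgz, real_inner_eq_re_inner, RCLike.inner_apply, conj_trivial, mul_comm]
  rfl

theorem measureReal_mul_norm_le [SFinite ν] [μ.IsAddHaarMeasure] (hν : IsLevy ν) (b : G)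
    (hΩ : Bornology.IsBounded Ω) {φ : G → ℝ} (hφ : φ ∈ testFunctionsOn Ω)
    {f g : Lp ℝ 2 (μ.restrict Ω)} (hf : f =ᵐ[μ.restrict Ω] φ)
    (hg : g =ᵐ[μ.restrict Ω] levyOp ν b φ) : ν.real {v | diam Ω < ‖v‖} * ‖f‖ ≤ ‖g‖ := by
  have hoff : ∀ χ : G → ℝ, ∫ z in Ω, φ z * χ z ∂μ = ∫ z, φ z * χ z ∂μ := fun χ =>
    setIntegral_eq_integral_of_forall_compl_eq_zero fun z hz => by rw [hφ.2 z hz, zero_mul]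
  have h := measureReal_mul_integral_sq_le (μ := μ) hν b hΩ hφ.1 hφ.2
  rw [← hoff, ← hoff, ← inner_eq_integral hf hf, ← inner_eq_integral hf hg,
    real_inner_self_eq_norm_sq] at h
  rcases (norm_nonneg f).eq_or_lt with hf₀ | hf₀
  · rw [← hf₀, mul_zero]
    exact norm_nonneg g
  · refine le_of_mul_le_mul_left ?_ hf₀
    linarith [real_inner_le_norm f g]

theorem exists_dirichlet_solution_operator [SFinite ν] [μ.IsAddHaarMeasure] (hν : IsLevy ν) (b : G)
    (hΩ : Bornology.IsBounded Ω) (hjump : 0 < ν.real {v | diam Ω < ‖v‖}) :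
    ∃ S : Lp ℝ 2 (μ.restrict Ω) →L[ℝ] Lp ℝ 2 (μ.restrict Ω), ∀ g, ∀ φ ∈ testFunctionsOn Ω,
      ∫ z in Ω, S g z * levyOp ν (-b) φ z ∂μ = ∫ z in Ω, g z * φ z ∂μ := by
  have hL : ∀ φ : testFunctionsOn Ω, MemLp (levyOp ν (-b) φ) 2 (μ.restrict Ω) := fun φ =>
    memLp_restrict_of_continuous hΩ (φ.2.1.continuous_levyOp hν (-b))
  have hid : ∀ φ : testFunctionsOn Ω, MemLp (φ : G → ℝ) 2 (μ.restrict Ω) := fun φ =>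
    memLp_restrict_of_continuous hΩ φ.2.1.continuous
  let A : testFunctionsOn Ω →ₗ[ℝ] Lp ℝ 2 (μ.restrict Ω) :=
    { toFun := fun φ => (hL φ).toLp
      map_add' := fun φ χ => by
        rw [← MemLp.toLp_add]
        exact MemLp.toLp_congr _ _ (.of_eq (levyOp_add hν (-b) φ.2.1 χ.2.1))
      map_smul' := fun r φ => by
        rw [RingHom.id_apply, ← MemLp.toLp_const_smul]
        exact MemLp.toLp_congr _ _ (.of_eq (levyOp_smul ν (-b) r φ.2.1)) }
  let j : testFunctionsOn Ω →ₗ[ℝ] Lp ℝ 2 (μ.restrict Ω) :=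
    { toFun := fun φ => (hid φ).toLp
      map_add' := fun φ χ => MemLp.toLp_add (hid φ) (hid χ)
      map_smul' := fun r φ => MemLp.toLp_const_smul r (hid φ) }
  obtain ⟨B, hB⟩ := exists_continuousLinearMap_comp_eq A j
    (C := (ν.real {v | diam Ω < ‖v‖})⁻¹) fun φ => by
      rw [← div_eq_inv_mul, le_div_iff₀ hjump, mul_comm]
      exact measureReal_mul_norm_le hν (-b) hΩ φ.2 (hid φ).coeFn_toLp (hL φ).coeFn_toLp
  refine ⟨ContinuousLinearMap.adjoint B, fun g φ hφ => ?_⟩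
  rw [← inner_eq_integral .rfl (hL ⟨φ, hφ⟩).coeFn_toLp, ContinuousLinearMap.adjoint_inner_left,
    ← inner_eq_integral .rfl (hid ⟨φ, hφ⟩).coeFn_toLp]
  exact congrArg (inner ℝ g) (hB ⟨φ, hφ⟩)

theorem isWeakSolution_sub_indicator [SFinite ν] [μ.IsAddHaarMeasure] (hν : IsLevy ν)
    (hΩ : Bornology.IsBounded Ω) (hΩm : MeasurableSet Ω) {w : G → ℝ} (hw : IsTest w)
    {f : Lp ℝ 2 (μ.restrict Ω)} (hf : ∀ φ ∈ testFunctionsOn Ω,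
      ∫ z in Ω, f z * levyOp ν (-b) φ z ∂μ = ∫ z in Ω, levyOp ν b w z * φ z ∂μ) :
    IsWeakSolution ν b Ω μ (w - Ω.indicator f) := by
  have : IsFiniteMeasure (μ.restrict Ω) := isFiniteMeasure_restrict.2 hΩ.measure_lt_top.ne
  have hfi : Integrable (Ω.indicator f) μ :=
    (integrable_indicator_iff hΩm).2 ((Lp.memLp f).integrable one_le_two)
  have hfc : HasCompactSupport (Ω.indicator f) := .intro hΩ.isCompact_closure
    fun z hz => indicator_of_notMem (fun h => hz (subset_closure h)) _
  refine ⟨hw.integrable.sub hfi, hw.hasCompactSupport.sub hfc, fun φ hφ => ?_⟩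
  have hL : Continuous (levyOp ν (-b) φ) := hφ.1.continuous_levyOp hν (-b)
  have hindicator : ∀ z, Ω.indicator f z * levyOp ν (-b) φ z =
      Ω.indicator (fun z => f z * levyOp ν (-b) φ z) z := fun z => by
    rw [indicator_mul_left]
  simp only [Pi.sub_apply, sub_mul]
  rw [integral_sub (hw.integrable_mul hL)
      (integrable_mul_continuous_of_hasCompactSupport hfi hfc hL),
    ← integral_mul_levyOp_eq hν b hφ.1 hw, funext hindicator, integral_indicator hΩm, hf φ hφ,
    setIntegral_eq_integral_of_forall_compl_eq_zero fun z hz => by rw [hφ.2 z hz, mul_zero]]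
  simp only [mul_comm, sub_self]

theorem integral_adjoint_mul_levyOp_of_mem_orthogonal [SFinite ν] [μ.IsAddHaarMeasure]
    (hν : IsLevy ν) (hΩ : Bornology.IsBounded Ω) (hΩm : MeasurableSet Ω)
    {S : Lp ℝ 2 (μ.restrict Ω) →L[ℝ] Lp ℝ 2 (μ.restrict Ω)}
    (hS : ∀ g, ∀ φ ∈ testFunctionsOn Ω,
      ∫ z in Ω, S g z * levyOp ν (-b) φ z ∂μ = ∫ z in Ω, g z * φ z ∂μ)
    {h : Lp ℝ 2 (μ.restrict Ω)} (hh : h ∈ (weakSolutionTraces hν b Ω μ)ᗮ) {w : G → ℝ}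
    (hw : IsTest w) :
    ∫ z in Ω, ContinuousLinearMap.adjoint S h z * levyOp ν b w z ∂μ = ∫ z in Ω, h z * w z ∂μ := by
  have hwLp : MemLp w 2 (μ.restrict Ω) := memLp_restrict_of_continuous hΩ hw.continuous
  have hLLp : MemLp (levyOp ν b w) 2 (μ.restrict Ω) :=
    memLp_restrict_of_continuous hΩ (hw.continuous_levyOp hν b)
  have hsol : IsWeakSolution ν b Ω μ (w - Ω.indicator (S hLLp.toLp)) :=
    isWeakSolution_sub_indicator hν hΩ hΩm hw fun φ hφ => by
      rw [hS _ φ hφ]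
      exact integral_congr_ae (hLLp.coeFn_toLp.mul .rfl)
  have htrace : hwLp.toLp - S hLLp.toLp ∈ weakSolutionTraces hν b Ω μ := by
    refine ⟨_, hsol, (Lp.coeFn_sub _ _).trans (hwLp.coeFn_toLp.sub ?_)⟩
    exact (indicator_ae_eq_restrict hΩm).symm
  have horth := (Submodule.mem_orthogonal' _ _).1 hh _ htrace
  rw [inner_sub_right, sub_eq_zero, ← ContinuousLinearMap.adjoint_inner_left] at horth
  rw [← inner_eq_integral .rfl hLLp.coeFn_toLp, ← horth, inner_eq_integral .rfl hwLp.coeFn_toLp]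

theorem weakSolutionTraces_topologicalClosure [SFinite ν] [μ.IsAddHaarMeasure] (hν : IsLevy ν)
    (hΩ : Bornology.IsBounded Ω) (hΩm : MeasurableSet Ω)
    (hjump : 0 < ν.real {v | diam Ω < ‖v‖})
    (hucp : HasUniqueContinuation ν b Ω μ) :
    (weakSolutionTraces hν b Ω μ).topologicalClosure = ⊤ := by
  have : IsFiniteMeasure (μ.restrict Ω) := isFiniteMeasure_restrict.2 hΩ.measure_lt_top.ne
  obtain ⟨S, hS⟩ := exists_dirichlet_solution_operator (μ := μ) hν b hΩ hjump
  refine Submodule.topologicalClosure_eq_top_iff.2 ((Submodule.eq_bot_iff _).2 fun h hh => ?_)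
  have hdual := fun w (hw : IsTest w) =>
    integral_adjoint_mul_levyOp_of_mem_orthogonal hν hΩ hΩm hS hh hw
  have hψ : ContinuousLinearMap.adjoint S h =ᵐ[μ.restrict Ω] 0 :=
    hucp _ (Lp.memLp _) fun w hw hwΩ => by
      rw [hdual w hw, setIntegral_eq_zero_of_forall_eq_zero fun z hz => by
        rw [hwΩ z hz, mul_zero]]
  refine Lp.ext (.trans ?_ (Lp.coeFn_zero ℝ 2 _).symm)
  refine ae_eq_zero_of_integral_contDiff_smul_eq_zero
    ((Lp.memLp h).integrable one_le_two).locallyIntegrable fun w hw hcw => ?_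
  have hzero : ∫ z in Ω, ContinuousLinearMap.adjoint S h z * levyOp ν b w z ∂μ = 0 :=
    integral_eq_zero_of_ae <| hψ.mono fun z hz => by simp only [hz, Pi.zero_apply, zero_mul]
  rw [hdual w ⟨hw, hcw⟩] at hzero
  simpa only [smul_eq_mul, mul_comm] using hzero

theorem integral_abs_le_norm_const_mul_norm {α : Type*} [MeasurableSpace α] {μ : Measure α}
    [IsFiniteMeasure μ] (f : Lp ℝ 2 μ) : ∫ z, |f z| ∂μ ≤ ‖Lp.const 2 μ (1 : ℝ)‖ * ‖f‖ := by
  have h := real_inner_le_norm (Lp.const 2 μ (1 : ℝ)) |f|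
  rw [inner_eq_integral (Lp.coeFn_const ..) (Lp.coeFn_abs f), norm_abs_eq_norm] at h
  simpa only [Function.const_apply, one_mul] using h

theorem exists_isWeakSolution_near [SFinite ν] [μ.IsAddHaarMeasure] (hν : IsLevy ν)
    (hΩ : Bornology.IsBounded Ω) (hΩm : MeasurableSet Ω)
    (hjump : 0 < ν.real {v | diam Ω < ‖v‖})
    (hucp : HasUniqueContinuation ν b Ω μ) {g : G → ℝ} (hg : Continuous g) {δ : ℝ} (hδ : 0 < δ) :
    ∃ u, IsWeakSolution ν b Ω μ u ∧ ∫ z in Ω, |g z - u z| ∂μ ≤ δ := by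
  have : IsFiniteMeasure (μ.restrict Ω) := isFiniteMeasure_restrict.2 hΩ.measure_lt_top.ne
  have hgLp : MemLp g 2 (μ.restrict Ω) := memLp_restrict_of_continuous hΩ hg
  have hmem : hgLp.toLp ∈ (weakSolutionTraces hν b Ω μ).topologicalClosure := by
    rw [weakSolutionTraces_topologicalClosure hν hΩ hΩm hjump hucp]
    trivial
  let C : ℝ := ‖Lp.const 2 (μ.restrict Ω) (1 : ℝ)‖
  obtain ⟨f, ⟨u, hu, hfu⟩, hf⟩ := Metric.mem_closure_iff.1 hmem (δ / (C + 1)) (by positivity)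
  refine ⟨u, hu, ?_⟩
  calc ∫ z in Ω, |g z - u z| ∂μ = ∫ z in Ω, |(hgLp.toLp - f) z| ∂μ := by
        refine integral_congr_ae ?_
        filter_upwards [Lp.coeFn_sub hgLp.toLp f, hgLp.coeFn_toLp, hfu] with z h h₁ h₂
        rw [h, Pi.sub_apply, h₁, h₂]
    _ ≤ C * ‖hgLp.toLp - f‖ := integral_abs_le_norm_const_mul_norm _
    _ ≤ C * (δ / (C + 1)) := by
        rw [← dist_eq_norm]
        gcongr
    _ ≤ δ := by
        rw [mul_div_assoc', div_le_iff₀ (by positivity)]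
        linarith

end Density

section Regularization

theorem convolution_lsmul_comm {G : Type*} [AddCommGroup G] [MeasurableSpace G]
    [MeasurableAdd G] [MeasurableNeg G] {μ : Measure G} [μ.IsAddLeftInvariant] [μ.IsNegInvariant]
    (f g : G → ℝ) : f ⋆[lsmul ℝ ℝ, μ] g = g ⋆[lsmul ℝ ℝ, μ] f := by
  ext p
  rw [convolution_lsmul_swap, convolution_lsmul]
  simp only [smul_eq_mul, mul_comm]

variable {G : Type*} [NormedAddCommGroup G] [NormedSpace ℝ G]

theorem IsTest.exists_norm_iteratedFDeriv_le {φ : G → ℝ} (hφ : IsTest φ) (k : ℕ) :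
    ∃ M : ℝ, 0 < M ∧ ∀ i ≤ k, ∀ p, ‖iteratedFDeriv ℝ i φ p‖ ≤ M := by
  have hbound : ∀ i, ∃ C, ∀ p, ‖iteratedFDeriv ℝ i φ p‖ ≤ C := fun i =>
    (hφ.hasCompactSupport.iteratedFDeriv i).exists_bound_of_continuous
      (hφ.contDiff.continuous_iteratedFDeriv (by exact_mod_cast le_top))
  choose C hC using hbound
  refine ⟨1 + ∑ i ∈ Finset.range (k + 1), |C i|, by positivity, fun i hi p => ?_⟩
  have h := Finset.single_le_sum (f := fun i => |C i|) (fun i _ => abs_nonneg _)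
    (Finset.mem_range.2 (Nat.lt_succ_of_le hi))
  linarith [hC i p, le_abs_self (C i)]

variable [MeasurableSpace G] [BorelSpace G] {ν μ : Measure G} {b : G} {Ω : Set G} {u φ : G → ℝ}

theorem IsTest.convolution (hu : Integrable u μ) (hcu : HasCompactSupport u) (hφ : IsTest φ) :
    IsTest (u ⋆[lsmul ℝ ℝ, μ] φ) :=
  ⟨hφ.hasCompactSupport.contDiff_convolution_right _ hu.locallyIntegrable hφ.contDiff,
    hcu.convolution _ hφ.hasCompactSupport⟩

variable [FiniteDimensional ℝ G] [μ.IsAddHaarMeasure]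

theorem IsWeakSolution.levyOp_convolution_eq_zero [SFinite ν] (hν : IsLevy ν)
    (hu : IsWeakSolution ν b Ω μ u) (hφ : IsTest φ) {p : G} (hp : ∀ z ∉ Ω, φ (p - z) = 0) :
    levyOp ν b (u ⋆[lsmul ℝ ℝ, μ] φ) p = 0 := by
  rw [levyOp_convolution hν b hu.integrable hφ]
  exact hu.integral_eq_zero _ ⟨hφ.comp_const_sub p, hp⟩

theorem norm_iteratedFDeriv_convolution_sub_le {g : G → ℝ} (hg : Integrable g μ)
    (hu : Integrable u μ) (hφ : IsTest φ) {k : ℕ} {M : ℝ}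
    (hM : ∀ i ≤ k, ∀ p, ‖iteratedFDeriv ℝ i φ p‖ ≤ M) {i : ℕ} (hi : i ≤ k) {p : G}
    (hp : ∀ z ∉ Ω, p - z ∉ tsupport φ) :
    ‖iteratedFDeriv ℝ i (g ⋆[lsmul ℝ ℝ, μ] φ) p - iteratedFDeriv ℝ i (u ⋆[lsmul ℝ ℝ, μ] φ) p‖ ≤
      M * ∫ z in Ω, |g z - u z| ∂μ := by
  have hφi : ContDiff ℝ i φ := hφ.contDiff.of_le (by exact_mod_cast le_top)
  have hconv : ∀ {f : G → ℝ}, Integrable f μ →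
      ConvolutionExistsAt f (iteratedFDeriv ℝ i φ) p (lsmul ℝ ℝ) μ := fun hf =>
    (hφ.hasCompactSupport.iteratedFDeriv i).convolutionExists_right _ hf.locallyIntegrable
      (hφi.continuous_iteratedFDeriv le_rfl) p
  rw [iteratedFDeriv_convolution_lsmul hg.locallyIntegrable hφ.hasCompactSupport hφi,
    iteratedFDeriv_convolution_lsmul hu.locallyIntegrable hφ.hasCompactSupport hφi]
  have hsub : (g ⋆[lsmul ℝ ℝ, μ] iteratedFDeriv ℝ i φ) p -
      (u ⋆[lsmul ℝ ℝ, μ] iteratedFDeriv ℝ i φ) p =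
        ((g - u) ⋆[lsmul ℝ ℝ, μ] iteratedFDeriv ℝ i φ) p := by
    simp only [convolution_lsmul, Pi.sub_apply, sub_smul]
    exact (integral_sub (hconv hg) (hconv hu)).symm
  rw [hsub]
  exact norm_convolution_lsmul_le_mul_setIntegral (hg.sub hu).integrableOn (hM i hi) fun z hz =>
    image_eq_zero_of_notMem_tsupport fun h => hp z hz (tsupport_iteratedFDeriv_subset i h)

theorem sub_notMem_tsupport_normed {χ : ContDiffBump (0 : G)} {r R : ℝ} (hχ : χ.rOut ≤ R - r)
    {p z : G} (hp : p ∈ ball 0 r) (hz : z ∉ ball 0 R) : p - z ∉ tsupport (χ.normed μ) := by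
  intro h
  rw [χ.tsupport_normed_eq, mem_closedBall_zero_iff] at h
  rw [mem_ball_zero_iff] at hp hz
  linarith [norm_sub_norm_le z p, norm_sub_rev z p]

theorem exists_isTest_levyOp_eq_zero_near [SFinite ν] (hν : IsLevy ν)
    (hjump : 0 < ν.real {v | diam (ball (0 : G) 2) < ‖v‖})
    (hucp : HasUniqueContinuation ν b (ball 0 2) μ) {σ : G → ℝ} {k : ℕ}
    (hσ : ContDiffOn ℝ k σ (closedBall 0 1)) {ε : ℝ} (hε : 0 < ε) :
    ∃ U, IsTest U ∧ (∀ p ∈ ball 0 1, levyOp ν b U p = 0) ∧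
      ∀ i ≤ k, ∀ p ∈ ball 0 1, ‖iteratedFDeriv ℝ i (fun q => σ q - U q) p‖ ≤ ε := by
  obtain ⟨g, hg, hcg, hσg⟩ := exists_contDiff_near hσ (show 0 < ε / 3 by positivity)
  have hgint : Integrable g μ := hg.continuous.integrable_of_hasCompactSupport hcg
  obtain ⟨χ, hχ, hgχ⟩ := exists_normed_bump_convolution_near (μ := μ) hg hcg one_pos
    (show 0 < ε / 3 by positivity)
  have hφ : IsTest (χ.normed μ) := ⟨χ.contDiff_normed, χ.hasCompactSupport_normed⟩
  have hsupp : ∀ p ∈ ball (0 : G) 1, ∀ z ∉ ball (0 : G) 2, p - z ∉ tsupport (χ.normed μ) :=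
    fun p hp z hz => sub_notMem_tsupport_normed (hχ.trans_eq (by norm_num)) hp hz
  obtain ⟨M, hM₀, hM⟩ := hφ.exists_norm_iteratedFDeriv_le k
  obtain ⟨u, hu, hgu⟩ := exists_isWeakSolution_near hν isBounded_ball measurableSet_ball hjump hucp
    hg.continuous (show 0 < ε / (3 * M) by positivity)
  have hU : IsTest (u ⋆[lsmul ℝ ℝ, μ] χ.normed μ) :=
    hφ.convolution hu.integrable hu.hasCompactSupport
  refine ⟨_, hU, fun p hp => hu.levyOp_convolution_eq_zero hν hφ fun z hz =>
    image_eq_zero_of_notMem_tsupport (hsupp p hp z hz), fun i hi p hp => ?_⟩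
  have hgi : ContDiffAt ℝ i g p := (hg.of_le (by exact_mod_cast hi)).contDiffAt
  have hUi : ContDiffAt ℝ i (u ⋆[lsmul ℝ ℝ, μ] χ.normed μ) p :=
    (hU.contDiff.of_le (by exact_mod_cast le_top)).contDiffAt
  have hσi : ContDiffAt ℝ i σ p := ((hσ.contDiffAt (mem_of_superset (isOpen_ball.mem_nhds hp)
    ball_subset_closedBall)).of_le (by exact_mod_cast hi))
  have h₁ := hσg i hi p hp
  have h₂ := hgχ i hi p
  rw [convolution_lsmul_comm] at h₂
  have h₃ := (norm_iteratedFDeriv_convolution_sub_le hgint hu.integrable hφ hM hi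
    (hsupp p hp)).trans (mul_le_mul_of_nonneg_left hgu hM₀.le)
  rw [fun_iteratedFDeriv_sub_apply hσi hgi] at h₁
  rw [fun_iteratedFDeriv_sub_apply hσi hUi]
  have hM₃ : M * (ε / (3 * M)) = ε / 3 := by field_simp
  linarith [norm_sub_le_norm_sub_add_norm_sub (iteratedFDeriv ℝ i σ p) (iteratedFDeriv ℝ i g p)
    (iteratedFDeriv ℝ i (u ⋆[lsmul ℝ ℝ, μ] χ.normed μ) p),
    norm_sub_le_norm_sub_add_norm_sub (iteratedFDeriv ℝ i g p)
    (iteratedFDeriv ℝ i (g ⋆[lsmul ℝ ℝ, μ] χ.normed μ) p)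
    (iteratedFDeriv ℝ i (u ⋆[lsmul ℝ ℝ, μ] χ.normed μ) p)]

end Regularization

section ExteriorPotentials

variable {E : Type*} [NormedAddCommGroup E] {G : E → ℝ} {r : ℝ}

theorem exists_bound_of_continuousOn_compl_zero [ProperSpace E] {F : Type*}
    [SeminormedAddCommGroup F] {G : E → F} (hG : ContinuousOn G {0}ᶜ) {m : ℝ} (hm : 0 < m)
    (R : ℝ) : ∃ C, ∀ z, m ≤ ‖z‖ → ‖z‖ ≤ R → ‖G z‖ ≤ C := by
  have hcompact : IsCompact (closedBall (0 : E) R ∩ {z | m ≤ ‖z‖}) :=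
    (isCompact_closedBall 0 R).inter_right (isClosed_le continuous_const continuous_norm)
  have hsub : closedBall (0 : E) R ∩ {z | m ≤ ‖z‖} ⊆ {0}ᶜ := fun z hz =>
    norm_pos_iff.1 (hm.trans_le hz.2)
  obtain ⟨C, hC⟩ := hcompact.exists_bound_of_continuousOn (hG.mono hsub)
  exact ⟨C, fun z hm hR => hC z ⟨mem_closedBall_zero_iff.2 hR, hm⟩⟩

theorem norm_sub_mem_Icc_of_mem_ball {x y z : E} (hx : ‖x‖ < r)
    (hz : z ∈ ball y ((‖y‖ - r) / 2)) :
    ‖z - x‖ ∈ Icc ((‖y‖ - r) / 2) (‖y‖ + (‖y‖ - r) / 2 + r) := by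
  rw [mem_ball_iff_norm] at hz
  constructor <;> linarith [norm_sub_norm_le z x, norm_sub_le z x, norm_sub_norm_le z y,
    norm_sub_norm_le y z, norm_sub_rev y z]

theorem sub_ne_zero_of_norm_lt_of_lt_norm {x y : E} (hx : ‖x‖ < r) (hy : r < ‖y‖) : y - x ≠ 0 :=
  sub_ne_zero.2 fun h => (hx.trans hy).ne (by rw [h])

variable [NormedSpace ℝ E] [FiniteDimensional ℝ E] [MeasurableSpace E] [BorelSpace E]
  {α : Type*} [MeasurableSpace α] {μ : Measure α} {f : α → ℝ} {X : α → E}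

theorem hasFDerivAt_integral_mul_comp_sub (hf : Integrable f μ) (hXm : Measurable X)
    (hX : ∀ᵐ p ∂μ, ‖X p‖ < r) (hGm : Measurable G) (hG : ContDiffOn ℝ 1 G {0}ᶜ) {y : E}
    (hy : r < ‖y‖) :
    Integrable (fun p => f p • fderiv ℝ G (y - X p)) μ ∧
      HasFDerivAt (fun y => ∫ p, f p * G (y - X p) ∂μ)
        (∫ p, f p • fderiv ℝ G (y - X p) ∂μ) y := by
  have hm : 0 < (‖y‖ - r) / 2 := by linarith
  have hy₀ : y ∈ ball y ((‖y‖ - r) / 2) := mem_ball_self hm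
  obtain ⟨C, hC⟩ := exists_bound_of_continuousOn_compl_zero hG.continuousOn hm
    (‖y‖ + (‖y‖ - r) / 2 + r)
  obtain ⟨C', hC'⟩ := exists_bound_of_continuousOn_compl_zero
    (hG.continuousOn_fderiv_of_isOpen isOpen_compl_singleton le_rfl) hm (‖y‖ + (‖y‖ - r) / 2 + r)
  have hmeas : ∀ z, AEStronglyMeasurable (fun p => f p * G (z - X p)) μ := fun z =>
    hf.aestronglyMeasurable.mul (hGm.comp (measurable_const.sub hXm)).aestronglyMeasurable
  have hmeas' : AEStronglyMeasurable (fun p => f p • fderiv ℝ G (y - X p)) μ :=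
    hf.aestronglyMeasurable.smul
      ((measurable_fderiv ℝ G).comp (measurable_const.sub hXm)).aestronglyMeasurable
  have hbound : ∀ᵐ p ∂μ, ∀ z ∈ ball y ((‖y‖ - r) / 2),
      ‖f p • fderiv ℝ G (z - X p)‖ ≤ ‖f p‖ * C' := by
    filter_upwards [hX] with p hp z hz
    obtain ⟨hlow, hup⟩ := norm_sub_mem_Icc_of_mem_ball hp hz
    rw [norm_smul]
    exact mul_le_mul_of_nonneg_left (hC' _ hlow hup) (norm_nonneg _)
  refine ⟨(hf.norm.mul_const C').mono' hmeas' (hbound.mono fun p hp => hp y hy₀),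
    hasFDerivAt_integral_of_dominated_of_fderiv_le (ball_mem_nhds y hm) (.of_forall hmeas) ?_
      hmeas' hbound (hf.norm.mul_const C') ?_⟩
  · refine (hf.norm.mul_const C).mono' (hmeas y) ?_
    filter_upwards [hX] with p hp
    obtain ⟨hlow, hup⟩ := norm_sub_mem_Icc_of_mem_ball hp hy₀
    rw [norm_mul]
    exact mul_le_mul_of_nonneg_left (hC _ hlow hup) (norm_nonneg _)
  · filter_upwards [hX] with p hp z hz
    have hne : z - X p ≠ 0 := norm_pos_iff.1 (hm.trans_le (norm_sub_mem_Icc_of_mem_ball hp hz).1)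
    have hd := ((hG.contDiffAt (isOpen_compl_singleton.mem_nhds hne)).differentiableAt
      one_ne_zero).hasFDerivAt
    exact (hd.comp z ((hasFDerivAt_id z).sub_const (X p))).const_mul (f p)

theorem integral_mul_fderiv_comp_sub_eq_zero (hf : Integrable f μ) (hXm : Measurable X)
    (hX : ∀ᵐ p ∂μ, ‖X p‖ < r) (hGm : Measurable G) (hG : ContDiffOn ℝ 1 G {0}ᶜ)
    (h : ∀ y, r < ‖y‖ → ∫ p, f p * G (y - X p) ∂μ = 0) {y : E} (hy : r < ‖y‖) (v : E) :
    Integrable (fun p => f p * fderiv ℝ G (y - X p) v) μ ∧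
      ∫ p, f p * fderiv ℝ G (y - X p) v ∂μ = 0 := by
  obtain ⟨hint, hderiv⟩ := hasFDerivAt_integral_mul_comp_sub hf hXm hX hGm hG hy
  have hzero : (fun y => ∫ p, f p * G (y - X p) ∂μ) =ᶠ[𝓝 y] 0 := by
    filter_upwards [(isOpen_lt continuous_const continuous_norm).mem_nhds hy] with z hz
    exact h z hz
  refine ⟨hint.apply_continuousLinearMap v, ?_⟩
  calc ∫ p, f p * fderiv ℝ G (y - X p) v ∂μ
      = (∫ p, f p • fderiv ℝ G (y - X p) ∂μ) v := by
        rw [ContinuousLinearMap.integral_apply hint]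
        rfl
    _ = 0 := by
        rw [← hderiv.fderiv, hzero.fderiv_eq]
        simp

theorem integrable_mul_mul_comp_sub {m : Measure E} [IsFiniteMeasureOnCompacts m]
    (hf : Integrable f μ) (hXm : Measurable X) (hX : ∀ᵐ p ∂μ, ‖X p‖ < r) (hGm : Measurable G)
    (hG : ContinuousOn G {0}ᶜ) {ζ : E → ℝ} (hζ : IsTest ζ) (hsupp : tsupport ζ ⊆ {y | r < ‖y‖}) :
    Integrable (Function.uncurry fun y p => ζ y * (f p * G (y - X p))) (m.prod μ) := by
  obtain ⟨ρ, hρ, hρζ⟩ := hζ.hasCompactSupport.isCompact.exists_forall_le'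
    continuous_norm.continuousOn hsupp
  obtain ⟨R, hR⟩ := hζ.hasCompactSupport.isCompact.isBounded.exists_norm_le
  obtain ⟨C, hC⟩ := exists_bound_of_continuousOn_compl_zero hG (sub_pos.2 hρ) (R + r)
  have hprod : Integrable (fun q : E × α => ζ q.1 * f q.2) (m.prod μ) := hζ.integrable.mul_prod hf
  have hGm' : Measurable fun q : E × α => G (q.1 - X q.2) := by fun_prop
  refine (hprod.norm.mul_const C).mono' ?_ ?_
  · refine (hprod.aestronglyMeasurable.mul hGm'.aestronglyMeasurable).congr (.of_forall fun q => ?_)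
    exact mul_assoc _ _ _
  · filter_upwards [Measure.quasiMeasurePreserving_snd.ae hX] with q hq
    rw [Function.uncurry, ← mul_assoc, norm_mul]
    by_cases hmem : q.1 ∈ tsupport ζ
    · refine mul_le_mul_of_nonneg_left (hC _ ?_ ?_) (norm_nonneg _)
      · linarith [hρζ _ hmem, norm_sub_norm_le q.1 (X q.2)]
      · linarith [hR _ hmem, norm_sub_le q.1 (X q.2)]
    · simp [image_eq_zero_of_notMem_tsupport hmem]

theorem integral_mul_comp_sub_eq_zero_of_weak {m : Measure E} [m.IsAddHaarMeasure] [SFinite μ]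
    (hf : Integrable f μ) (hXm : Measurable X) (hX : ∀ᵐ p ∂μ, ‖X p‖ < r) (hGm : Measurable G)
    (hG : ContDiffOn ℝ 1 G {0}ᶜ)
    (h : ∀ ζ : E → ℝ, IsTest ζ → tsupport ζ ⊆ {y | r < ‖y‖} →
      ∫ p, f p * ∫ y, ζ y * G (y - X p) ∂m ∂μ = 0) :
    ∀ y, r < ‖y‖ → ∫ p, f p * G (y - X p) ∂μ = 0 := by
  have hopen : IsOpen {y : E | r < ‖y‖} := isOpen_lt continuous_const continuous_norm
  have hcont : ContinuousOn (fun y => ∫ p, f p * G (y - X p) ∂μ) {y | r < ‖y‖} := fun y hy =>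
    (hasFDerivAt_integral_mul_comp_sub hf hXm hX hGm hG hy).2.continuousAt.continuousWithinAt
  refine Measure.eqOn_open_of_ae_eq ((ae_restrict_iff' hopen.measurableSet).2
    (hopen.ae_eq_zero_of_integral_contDiff_smul_eq_zero
      (hcont.locallyIntegrableOn (μ := m) hopen.measurableSet) fun ζ hζ hcζ hsζ => ?_))
    hopen hcont continuousOn_const
  rw [← h ζ ⟨hζ, hcζ⟩ hsζ]
  simp only [smul_eq_mul, ← integral_const_mul]
  rw [integral_integral_swap (integrable_mul_mul_comp_sub hf hXm hX hGm hG.continuousOn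
    ⟨hζ, hcζ⟩ hsζ)]
  simp only [mul_left_comm]

end ExteriorPotentials

section RieszPotentials

variable {E : Type*} [NormedAddCommGroup E] [InnerProductSpace ℝ E]

theorem hasFDerivAt_norm_sq_rpow (e : ℝ) {z : E} (hz : z ≠ 0) :
    HasFDerivAt (fun z : E => (‖z‖ ^ 2) ^ e)
      ((e * (‖z‖ ^ 2) ^ (e - 1)) • (2 • innerSL ℝ z)) z :=
  (hasStrictFDerivAt_norm_sq z).hasFDerivAt.rpow_const (.inl (by positivity))

theorem fderiv_norm_sq_rpow_apply (e : ℝ) {z : E} (hz : z ≠ 0) (v : E) :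
    fderiv ℝ (fun z : E => (‖z‖ ^ 2) ^ e) z v = 2 * e * (⟪z, v⟫_ℝ * (‖z‖ ^ 2) ^ (e - 1)) := by
  rw [(hasFDerivAt_norm_sq_rpow e hz).fderiv]
  simp only [smul_apply, innerSL_apply_apply, nsmul_eq_mul, smul_eq_mul, Nat.cast_ofNat]
  ring

theorem contDiffOn_norm_sq_rpow (e : ℝ) : ContDiffOn ℝ 1 (fun z : E => (‖z‖ ^ 2) ^ e) {0}ᶜ :=
  fun _ hz => ((contDiff_norm_sq ℝ).contDiffAt.rpow_const_of_ne
    (pow_ne_zero 2 (norm_ne_zero_iff.2 hz))).contDiffWithinAt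

theorem fderiv_inner_mul_norm_sq_rpow_apply (e : ℝ) {z : E} (hz : z ≠ 0) (v : E) :
    fderiv ℝ (fun z : E => ⟪z, v⟫_ℝ * (‖z‖ ^ 2) ^ e) z v =
      ‖v‖ ^ 2 * (‖z‖ ^ 2) ^ e + 2 * e * (‖z‖ ^ 2) ^ (e - 1) * ⟪z, v⟫_ℝ ^ 2 := by
  have hinner : HasFDerivAt (fun z : E => ⟪z, v⟫_ℝ) (innerSL ℝ v) z := by
    simpa only [real_inner_comm v] using! (innerSL ℝ v).hasFDerivAt
  rw [(hinner.fun_mul (hasFDerivAt_norm_sq_rpow e hz)).fderiv]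
  simp only [add_apply, smul_apply, innerSL_apply_apply, nsmul_eq_mul, smul_eq_mul,
    Nat.cast_ofNat, real_inner_self_eq_norm_sq]
  ring

theorem sum_fderiv_inner_mul_norm_sq_rpow {ι : Type*} [Fintype ι] (b : OrthonormalBasis ι ℝ E)
    (e : ℝ) {z : E} (hz : z ≠ 0) :
    ∑ i, fderiv ℝ (fun z : E => ⟪z, b i⟫_ℝ * (‖z‖ ^ 2) ^ e) z (b i) =
      (Fintype.card ι + 2 * e) * (‖z‖ ^ 2) ^ e := by
  have hpos : 0 < ‖z‖ ^ 2 := by positivity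
  have hparseval : ∑ i, ⟪z, b i⟫_ℝ ^ 2 = ‖z‖ ^ 2 := by
    simpa using b.sum_sq_norm_inner_left z
  simp only [fderiv_inner_mul_norm_sq_rpow_apply e hz, b.norm_eq_one, one_pow, one_mul]
  rw [Finset.sum_add_distrib, ← Finset.mul_sum, hparseval, Finset.sum_const, Finset.card_univ,
    nsmul_eq_mul, Real.rpow_sub_one hpos.ne']
  field_simp

-- The Kelvin transform: for `y = z / ‖z‖ ^ 2`,
-- `‖y - x‖ ^ 2 * ‖z‖ ^ 2 = 1 - 2 * ⟪z, x⟫ + ‖z‖ ^ 2 * ‖x‖ ^ 2`.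
theorem norm_inv_smul_sub_sq {z : E} (hz : z ≠ 0) (x : E) :
    ‖(‖z‖ ^ 2)⁻¹ • z - x‖ ^ 2 =
      (‖z‖ ^ 2)⁻¹ * (1 + (‖z‖ ^ 2 * ‖x‖ ^ 2 - 2 * ⟪z, x⟫_ℝ)) := by
  have hz' : ‖z‖ ≠ 0 := norm_ne_zero_iff.2 hz
  rw [norm_sub_sq_real, norm_smul, real_inner_smul_left, norm_inv, norm_pow, norm_norm]
  field_simp
  ring

theorem neg_le_kelvin {x : E} {r : ℝ} (hx : ‖x‖ ≤ r) (z : E) :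
    -(2 * r * ‖z‖) ≤ ‖z‖ ^ 2 * ‖x‖ ^ 2 - 2 * ⟪z, x⟫_ℝ := by
  have hinner : ⟪z, x⟫_ℝ ≤ ‖z‖ * r := (real_inner_le_norm z x).trans (by gcongr)
  have hnn : 0 ≤ ‖z‖ ^ 2 * ‖x‖ ^ 2 := by positivity
  linarith

theorem tendsto_natCast_mul_kelvin {z : ℕ → E} {ζ : E} (hz₀ : Tendsto z atTop (𝓝 0))
    (hz : Tendsto (fun N : ℕ => (N : ℝ) • z N) atTop (𝓝 ζ)) (x : E) :
    Tendsto (fun N : ℕ => N * (‖z N‖ ^ 2 * ‖x‖ ^ 2 - 2 * ⟪z N, x⟫_ℝ)) atTop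
      (𝓝 (-(2 * ⟪ζ, x⟫_ℝ))) := by
  have hsq := ((hz.inner hz₀).mul_const (‖x‖ ^ 2)).sub
    ((hz.inner (tendsto_const_nhds (x := x))).const_mul 2)
  rw [inner_zero_right, zero_mul, zero_sub] at hsq
  refine hsq.congr fun N => ?_
  rw [real_inner_smul_left, real_inner_smul_left, real_inner_self_eq_norm_sq]
  ring

theorem tendsto_one_add_rpow_sub_natCast {g : ℕ → ℝ} {L : ℝ} (e : ℝ)
    (hg : Tendsto (fun N : ℕ => N * g N) atTop (𝓝 L)) :
    Tendsto (fun N : ℕ => (1 + g N) ^ (e - N)) atTop (𝓝 (Real.exp (-L))) := by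
  have hg₀ : Tendsto g atTop (𝓝 0) := by
    have h := (tendsto_inv_atTop_nhds_zero_nat (𝕜 := ℝ)).mul hg
    rw [zero_mul] at h
    refine h.congr' ?_
    filter_upwards [eventually_gt_atTop 0] with N hN
    field_simp
  have hbase : Tendsto (fun N => 1 + g N) atTop (𝓝 1) := by simpa using hg₀.const_add 1
  have hquot := (hbase.rpow_const (p := e) (.inl one_ne_zero)).div
    (Real.tendsto_one_add_pow_exp_of_tendsto hg) (Real.exp_pos L).ne'
  rw [Real.one_rpow, one_div, ← Real.exp_neg] at hquot
  refine hquot.congr' ?_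
  filter_upwards [hbase.eventually (lt_mem_nhds one_pos)] with N hN
  exact (Real.rpow_sub_natCast hN.ne' e N).symm

theorem exists_seq_ne_zero_natCast_smul_tendsto [Nontrivial E] (η : E) :
    ∃ z : ℕ → E, (∀ᶠ N in atTop, z N ≠ 0) ∧ Tendsto z atTop (𝓝 0) ∧
      Tendsto (fun N : ℕ => (N : ℝ) • z N) atTop (𝓝 η) := by
  obtain ⟨ξ, hξ, hξη⟩ := mem_closure_iff_seq_limit.1 (dense_compl_singleton (0 : E) η)
  have hcancel : ∀ᶠ N : ℕ in atTop, ((N : ℝ) • (N : ℝ)⁻¹ • ξ N) = ξ N := by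
    filter_upwards [eventually_ne_atTop 0] with N hN
    exact smul_inv_smul₀ (by exact_mod_cast hN) _
  refine ⟨fun N => (N : ℝ)⁻¹ • ξ N, ?_, ?_, hξη.congr' (hcancel.mono fun _ => Eq.symm)⟩
  · filter_upwards [eventually_ne_atTop 0] with N hN
    exact smul_ne_zero (inv_ne_zero (by exact_mod_cast hN)) (hξ N)
  · simpa using (tendsto_inv_atTop_nhds_zero_nat (𝕜 := ℝ)).smul hξη

variable {α : Type*} [MeasurableSpace α] {μ : Measure α} {f : α → ℝ} {X : α → E} {r e : ℝ}

theorem integral_mul_kelvin_rpow_eq_zero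
    (h : ∀ y, r < ‖y‖ → ∫ p, f p * (‖y - X p‖ ^ 2) ^ e ∂μ = 0) {z : E} (hz : z ≠ 0)
    (hzr : r * ‖z‖ < 1) :
    ∫ p, f p * (1 + (‖z‖ ^ 2 * ‖X p‖ ^ 2 - 2 * ⟪z, X p⟫_ℝ)) ^ e ∂μ = 0 := by
  have hz' : 0 < ‖z‖ := norm_pos_iff.2 hz
  have hnorm : ‖(‖z‖ ^ 2)⁻¹ • z‖ = ‖z‖⁻¹ := by
    rw [norm_smul, norm_inv, norm_pow, norm_norm]
    field_simp
  have hy : r < ‖(‖z‖ ^ 2)⁻¹ • z‖ := by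
    rwa [hnorm, ← one_div, lt_div_iff₀ hz']
  have hvanish := h _ hy
  have hsplit : ∀ x : E, (‖(‖z‖ ^ 2)⁻¹ • z - x‖ ^ 2) ^ e = ((‖z‖ ^ 2)⁻¹) ^ e *
      (1 + (‖z‖ ^ 2 * ‖x‖ ^ 2 - 2 * ⟪z, x⟫_ℝ)) ^ e := fun x => by
    have hnn : 0 ≤ (‖z‖ ^ 2)⁻¹ * (1 + (‖z‖ ^ 2 * ‖x‖ ^ 2 - 2 * ⟪z, x⟫_ℝ)) :=
      norm_inv_smul_sub_sq hz x ▸ sq_nonneg _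
    rw [norm_inv_smul_sub_sq hz, Real.mul_rpow (by positivity)
      (nonneg_of_mul_nonneg_right hnn (by positivity))]
  simp only [hsplit, mul_left_comm (f _)] at hvanish
  rw [integral_const_mul] at hvanish
  exact (mul_eq_zero.1 hvanish).resolve_left (by positivity)

theorem eventually_norm_mul_kelvin_rpow_le (hX : ∀ᵐ p ∂μ, ‖X p‖ < r) (e : ℝ) {z : ℕ → E} {ζ : E}
    (hz₀ : Tendsto z atTop (𝓝 0)) (hz : Tendsto (fun N : ℕ => (N : ℝ) • z N) atTop (𝓝 ζ)) :
    ∀ᶠ N : ℕ in atTop, ∀ᵐ p ∂μ,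
      ‖f p * (1 + (‖z N‖ ^ 2 * ‖X p‖ ^ 2 - 2 * ⟪z N, X p⟫_ℝ)) ^ (e - N)‖ ≤
        ‖f p‖ * (Real.exp (2 * r * ‖ζ‖) + 1) := by
  have hlow : Tendsto (fun N : ℕ => N * -(2 * r * ‖z N‖)) atTop (𝓝 (-(2 * r * ‖ζ‖))) := by
    refine (hz.norm.const_mul (2 * r)).neg.congr fun N => ?_
    rw [norm_smul, Real.norm_natCast]
    ring
  have hbase : Tendsto (fun N => 1 + -(2 * r * ‖z N‖)) atTop (𝓝 1) := by
    simpa using (hz₀.norm.const_mul (2 * r)).neg.const_add 1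
  have hpow := tendsto_one_add_rpow_sub_natCast e hlow
  rw [neg_neg] at hpow
  filter_upwards [hbase.eventually (lt_mem_nhds one_pos), eventually_ge_atTop ⌈e⌉₊,
    hpow.eventually (gt_mem_nhds (lt_add_one _))] with N hpos hN hle
  filter_upwards [hX] with p hp
  have hmono := neg_le_kelvin hp.le (z N)
  rw [norm_mul, Real.norm_of_nonneg (Real.rpow_nonneg (by linarith) _)]
  refine mul_le_mul_of_nonneg_left (le_trans ?_ hle.le) (norm_nonneg _)
  exact Real.rpow_le_rpow_of_nonpos hpos (by linarith) (sub_nonpos.2 (Nat.ceil_le.1 hN))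

variable [FiniteDimensional ℝ E] [MeasurableSpace E] [BorelSpace E]

theorem integral_mul_inner_mul_norm_sq_rpow_sub_one (hf : Integrable f μ) (hXm : Measurable X)
    (hX : ∀ᵐ p ∂μ, ‖X p‖ < r) (he : e ≠ 0)
    (h : ∀ y, r < ‖y‖ → ∫ p, f p * (‖y - X p‖ ^ 2) ^ e ∂μ = 0) (v : E) {y : E} (hy : r < ‖y‖) :
    ∫ p, f p * (⟪y - X p, v⟫_ℝ * (‖y - X p‖ ^ 2) ^ (e - 1)) ∂μ = 0 := by
  have hderiv := (integral_mul_fderiv_comp_sub_eq_zero hf hXm hX (by fun_prop)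
    (contDiffOn_norm_sq_rpow e) h hy v).2
  have hcongr : ∫ p, f p * fderiv ℝ (fun z : E => (‖z‖ ^ 2) ^ e) (y - X p) v ∂μ =
      ∫ p, 2 * e * (f p * (⟪y - X p, v⟫_ℝ * (‖y - X p‖ ^ 2) ^ (e - 1))) ∂μ := by
    refine integral_congr_ae (hX.mono fun p hp => ?_)
    simp only [fderiv_norm_sq_rpow_apply e (sub_ne_zero_of_norm_lt_of_lt_norm hp hy)]
    ring
  rw [hcongr, integral_const_mul] at hderiv
  exact (mul_eq_zero.1 hderiv).resolve_left (mul_ne_zero two_ne_zero he)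

theorem integral_mul_norm_sq_rpow_sub_one (hf : Integrable f μ) (hXm : Measurable X)
    (hX : ∀ᵐ p ∂μ, ‖X p‖ < r) (he : e ≠ 0) (he' : Module.finrank ℝ E + 2 * (e - 1) ≠ 0)
    (h : ∀ y, r < ‖y‖ → ∫ p, f p * (‖y - X p‖ ^ 2) ^ e ∂μ = 0) {y : E} (hy : r < ‖y‖) :
    ∫ p, f p * (‖y - X p‖ ^ 2) ^ (e - 1) ∂μ = 0 := by
  let b := stdOrthonormalBasis ℝ E
  let G := fun i (z : E) => ⟪z, b i⟫_ℝ * (‖z‖ ^ 2) ^ (e - 1)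
  have hG : ∀ i, ContDiffOn ℝ 1 (G i) {0}ᶜ := fun i =>
    (contDiff_id.inner ℝ contDiff_const).contDiffOn.mul (contDiffOn_norm_sq_rpow (e - 1))
  have hderiv := fun i => integral_mul_fderiv_comp_sub_eq_zero hf hXm hX (by fun_prop) (hG i)
    (fun y hy => integral_mul_inner_mul_norm_sq_rpow_sub_one hf hXm hX he h (b i) hy) hy (b i)
  have hlaplace : ∫ p, ∑ i, f p * fderiv ℝ (G i) (y - X p) (b i) ∂μ =
      (Module.finrank ℝ E + 2 * (e - 1)) * ∫ p, f p * (‖y - X p‖ ^ 2) ^ (e - 1) ∂μ := by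
    rw [← integral_const_mul]
    refine integral_congr_ae (hX.mono fun p hp => ?_)
    simp only [G, ← Finset.mul_sum, sum_fderiv_inner_mul_norm_sq_rpow b (e - 1)
      (sub_ne_zero_of_norm_lt_of_lt_norm hp hy), Fintype.card_fin]
    ring
  rw [integral_finsetSum _ fun i _ => (hderiv i).1,
    Finset.sum_eq_zero fun i _ => (hderiv i).2] at hlaplace
  exact (mul_eq_zero.1 hlaplace.symm).resolve_left he'

theorem integral_mul_norm_sq_rpow_sub_natCast (hf : Integrable f μ) (hXm : Measurable X)
    (hX : ∀ᵐ p ∂μ, ‖X p‖ < r) (he : e < 0) (he' : Module.finrank ℝ E + 2 * e < 0)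
    (h : ∀ y, r < ‖y‖ → ∫ p, f p * (‖y - X p‖ ^ 2) ^ e ∂μ = 0) (N : ℕ) :
    ∀ y, r < ‖y‖ → ∫ p, f p * (‖y - X p‖ ^ 2) ^ (e - N) ∂μ = 0 := by
  induction N with
  | zero => simpa using h
  | succ N ih =>
    have : (0 : ℝ) ≤ N := N.cast_nonneg
    intro y hy
    have hstep := integral_mul_norm_sq_rpow_sub_one hf hXm hX (by linarith) (by linarith) ih hy
    rwa [sub_sub, ← Nat.cast_succ] at hstep

theorem integral_mul_exp_inner_eq_zero [Nontrivial E] (hf : Integrable f μ) (hXm : Measurable X)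
    (hX : ∀ᵐ p ∂μ, ‖X p‖ < r) (he : e < 0) (he' : Module.finrank ℝ E + 2 * e < 0)
    (h : ∀ y, r < ‖y‖ → ∫ p, f p * (‖y - X p‖ ^ 2) ^ e ∂μ = 0) (η : E) :
    ∫ p, f p * Real.exp ⟪η, X p⟫_ℝ ∂μ = 0 := by
  obtain ⟨z, hz_ne, hz₀, hz⟩ := exists_seq_ne_zero_natCast_smul_tendsto ((2 : ℝ)⁻¹ • η)
  have hlim := tendsto_integral_filter_of_dominated_convergence _
    (.of_forall fun N : ℕ => hf.aestronglyMeasurable.mul (Measurable.aestronglyMeasurable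
      (f := fun p => (1 + (‖z N‖ ^ 2 * ‖X p‖ ^ 2 - 2 * ⟪z N, X p⟫_ℝ)) ^ (e - N)) (by fun_prop)))
    (eventually_norm_mul_kelvin_rpow_le hX e hz₀ hz) (hf.norm.mul_const _)
    (.of_forall fun p => (tendsto_one_add_rpow_sub_natCast e
      (tendsto_natCast_mul_kelvin hz₀ hz (X p))).const_mul (f p))
  simp only [neg_neg, real_inner_smul_left, mul_inv_cancel_left₀ (two_ne_zero' ℝ)] at hlim
  refine tendsto_nhds_unique hlim (tendsto_const_nhds.congr' ?_)
  have hr : ∀ᶠ N in atTop, r * ‖z N‖ < 1 := by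
    have := hz₀.norm.const_mul r
    rw [norm_zero, mul_zero] at this
    exact this.eventually (gt_mem_nhds one_pos)
  filter_upwards [hz_ne, hr] with N hN hNr
  exact (integral_mul_kelvin_rpow_eq_zero
    (integral_mul_norm_sq_rpow_sub_natCast hf hXm hX he he' h N) hN hNr).symm

end RieszPotentials

section Laplace

variable {G : Type*} [NormedAddCommGroup G] [NormedSpace ℝ G] [MeasurableSpace G] [BorelSpace G]

-- The moment generating function of every functional extends analytically, so it determines the
-- characteristic function.
theorem measure_eq_of_forall_integral_exp_eq [SecondCountableTopology G] [CompleteSpace G]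
    {P Q : Measure G} [IsFiniteMeasure P] [IsFiniteMeasure Q]
    (hint : ∀ ℓ : StrongDual ℝ G, Integrable (fun x => Real.exp (ℓ x)) P)
    (h : ∀ ℓ : StrongDual ℝ G, ∫ x, Real.exp (ℓ x) ∂P = ∫ x, Real.exp (ℓ x) ∂Q) : P = Q := by
  refine Measure.ext_of_charFunDual (funext fun ℓ => ?_)
  have hmgf : ProbabilityTheory.mgf ℓ P = ProbabilityTheory.mgf ℓ Q := funext fun t => h (t • ℓ)
  have hset : ProbabilityTheory.integrableExpSet ℓ P = univ :=
    eq_univ_of_forall fun t => hint (t • ℓ)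
  have hzero : P = 0 ↔ Q = 0 := by
    have hmass : P.real univ = Q.real univ := by simpa using h 0
    rw [← Measure.measure_univ_eq_zero, ← Measure.measure_univ_eq_zero,
      ← measureReal_eq_zero_iff, ← measureReal_eq_zero_iff, hmass]
  have hcomplex := ProbabilityTheory.eqOn_complexMGF_of_mgf' hmgf hzero
    (x := (1 : ℝ) * Complex.I) (by simp [hset])
  rwa [ProbabilityTheory.complexMGF_mul_I (by fun_prop),
    ProbabilityTheory.complexMGF_mul_I (by fun_prop), ← charFunDual_eq_charFun_map_one,
    ← charFunDual_eq_charFun_map_one] at hcomplex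

theorem toReal_ofReal_smul_exp (a b : ℝ) :
    (ENNReal.ofReal a).toReal • Real.exp b = max (a * Real.exp b) 0 := by
  rw [ENNReal.toReal_ofReal', smul_eq_mul, max_mul_of_nonneg _ _ (Real.exp_pos b).le, zero_mul]

theorem ae_eq_zero_of_forall_integral_mul_exp_eq_zero [SecondCountableTopology G] [CompleteSpace G]
    {μ : Measure G} {ψ : G → ℝ}
    (hint : ∀ ℓ : StrongDual ℝ G, Integrable (fun x => ψ x * Real.exp (ℓ x)) μ)
    (h : ∀ ℓ : StrongDual ℝ G, ∫ x, ψ x * Real.exp (ℓ x) ∂μ = 0) : ψ =ᵐ[μ] 0 := by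
  have hψ : Integrable ψ μ := by simpa using hint 0
  have hpos : AEMeasurable (fun x => ENNReal.ofReal (ψ x)) μ := hψ.aemeasurable.ennreal_ofReal
  have hneg : AEMeasurable (fun x => ENNReal.ofReal (-ψ x)) μ := hψ.neg.aemeasurable.ennreal_ofReal
  have := isFiniteMeasure_withDensity_ofReal hψ.2
  have := isFiniteMeasure_withDensity_ofReal hψ.neg.2
  have heq : μ.withDensity (fun x => ENNReal.ofReal (ψ x)) =
      μ.withDensity fun x => ENNReal.ofReal (-ψ x) := by
    refine measure_eq_of_forall_integral_exp_eq (fun ℓ => ?_) fun ℓ => ?_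
    · rw [integrable_withDensity_iff_integrable_smul₀' hpos (by simp)]
      simpa only [toReal_ofReal_smul_exp] using (hint ℓ).pos_part
    · rw [integral_withDensity_eq_integral_toReal_smul₀ hpos (by simp),
        integral_withDensity_eq_integral_toReal_smul₀ hneg (by simp), ← sub_eq_zero]
      simp only [toReal_ofReal_smul_exp, neg_mul]
      rw [← integral_sub (hint ℓ).pos_part (hint ℓ).neg_part]
      simpa only [max_zero_sub_max_neg_zero_eq_self] using h ℓ
  rw [withDensity_eq_iff hpos hneg hψ.lintegral_lt_top.ne] at heq
  filter_upwards [heq] with x hx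
  rcases le_total (ψ x) 0 with hx0 | hx0
  · rw [ENNReal.ofReal_of_nonpos hx0, eq_comm, ENNReal.ofReal_eq_zero] at hx
    exact hx0.antisymm (neg_nonpos.1 hx)
  · rw [ENNReal.ofReal_of_nonpos (neg_nonpos.2 hx0), ENNReal.ofReal_eq_zero] at hx
    exact hx.antisymm hx0

end Laplace

section SymmetricLevyMeasures

variable {E : Type*} [NormedAddCommGroup E] [MeasurableSpace E] [BorelSpace E] {ν : Measure E}

theorem tendsto_setIntegral_norm_ge {F : E → ℝ} (hF : Integrable F ν) (hF₀ : F 0 = 0) :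
    Tendsto (fun ρ => ∫ y in {y | ρ ≤ ‖y‖}, F y ∂ν) (𝓝[>] 0) (𝓝 (∫ y, F y ∂ν)) := by
  have hS : ∀ ρ : ℝ, MeasurableSet {y : E | ρ ≤ ‖y‖} := fun ρ =>
    measurableSet_le measurable_const measurable_norm
  simp only [← integral_indicator (hS _)]
  refine tendsto_integral_filter_of_dominated_convergence (fun y => ‖F y‖)
    (.of_forall fun ρ => hF.aestronglyMeasurable.indicator (hS ρ))
    (.of_forall fun ρ => .of_forall fun y => norm_indicator_le_norm_self _ _) hF.norm
    (.of_forall fun y => tendsto_const_nhds.congr' ?_)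
  rcases eq_or_ne y 0 with rfl | hy
  · exact .of_forall fun ρ => by simp [indicator, hF₀]
  · filter_upwards [Ioo_mem_nhdsGT (norm_pos_iff.2 hy)] with ρ hρ
    exact (indicator_of_mem (s := {y | ρ ≤ ‖y‖}) hρ.2.le F).symm

theorem setIntegral_norm_ge_comp_neg [ν.IsNegInvariant] (f : E → ℝ) (ρ : ℝ) :
    ∫ y in {y | ρ ≤ ‖y‖}, f (-y) ∂ν = ∫ y in {y | ρ ≤ ‖y‖}, f y ∂ν := by
  have h := (Measure.measurePreserving_neg ν).setIntegral_preimage_emb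
    (MeasurableEquiv.neg E).measurableEmbedding f {y | ρ ≤ ‖y‖}
  simpa using! h

theorem IsLevy.map_prodMk_zero (hν : IsLevy ν) : IsLevy (ν.map fun y => (y, (0 : ℝ))) := by
  have hmeas : AEStronglyMeasurable (fun v : E × ℝ => min (‖v‖ ^ 2) 1)
      (ν.map fun y => (y, (0 : ℝ))) := Measurable.aestronglyMeasurable (by fun_prop)
  rw [IsLevy, integrable_map_measure hmeas measurable_prodMk_right.aemeasurable]
  simpa [Function.comp_def] using! hν

theorem measureReal_map_prodMk_zero_norm_gt (d : ℝ) :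
    (ν.map fun y => (y, (0 : ℝ))).real {v | d < ‖v‖} = ν.real {y | d < ‖y‖} := by
  rw [map_measureReal_apply measurable_prodMk_right
    (measurableSet_lt measurable_const measurable_norm)]
  simp

variable [NormedSpace ℝ E] [ν.IsNegInvariant] {v : E → ℝ}

theorem IsTest.tendsto_setIntegral_sub_translate (hν : IsLevy ν) (hv : IsTest v) (x : E) :
    Tendsto (fun ρ => ∫ y in {y | ρ ≤ ‖y‖}, (v x - v (x + y)) ∂ν) (𝓝[>] 0)
      (𝓝 ((∫ y, secondDiff v x y ∂ν) / 2)) := by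
  obtain ⟨A, hA⟩ := hv.hasCompactSupport.exists_bound_of_continuous hv.continuous
  have hint : ∀ ρ > 0, ∀ w : E → E, Continuous w →
      IntegrableOn (fun y => v x - v (w y)) {y | ρ ≤ ‖y‖} ν := fun ρ hρ w hw =>
    Measure.integrableOn_of_bounded (hν.measure_norm_ge_lt_top hρ).ne
      (continuous_const.sub (hv.continuous.comp hw)).aestronglyMeasurable
      (.of_forall fun y => (norm_sub_le _ _).trans (add_le_add (hA x) (hA (w y))))
  have hzero : secondDiff v x 0 = 0 := by
    simp only [secondDiff, add_zero, sub_zero]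
    ring
  refine ((tendsto_setIntegral_norm_ge (hv.integrable_secondDiff hν x) hzero).div_const 2).congr' ?_
  filter_upwards [self_mem_nhdsWithin] with ρ hρ
  have hreflect := setIntegral_norm_ge_comp_neg (ν := ν) (fun y => v x - v (x + y)) ρ
  have hsplit : ∀ y, secondDiff v x y = (v x - v (x + y)) + (v x - v (x + -y)) := fun y => by
    rw [secondDiff, ← sub_eq_add_neg]
    ring
  simp only [hsplit]
  rw [integral_add (hint ρ hρ _ (by fun_prop)) (hint ρ hρ _ (by fun_prop)), hreflect]
  ring

theorem IsTest.integral_secondDiff_of_eq_zero_on_ball (hν : IsLevy ν) (hv : IsTest v) {x : E}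
    {δ : ℝ} (hδ : 0 < δ) (hzero : ∀ y ∈ ball x δ, v y = 0) :
    (∫ y, secondDiff v x y ∂ν) / 2 = -∫ y, v (x + y) ∂ν := by
  refine tendsto_nhds_unique (hv.tendsto_setIntegral_sub_translate hν x)
    (tendsto_const_nhds.congr' ?_)
  filter_upwards [Ioo_mem_nhdsGT hδ] with ρ hρ
  rw [setIntegral_eq_integral_of_forall_compl_eq_zero fun y hy => ?_]
  · simp only [hzero x (mem_ball_self hδ), zero_sub, integral_neg]
  · have hy' : ‖y‖ < ρ := not_le.1 hy
    rw [hzero x (mem_ball_self hδ), hzero (x + y) (by simpa using hy'.trans hρ.2), sub_self]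

end SymmetricLevyMeasures

section SpaceTime

variable {E : Type*} [NormedAddCommGroup E] [NormedSpace ℝ E]

theorem IsTest.comp_prodMk {φ : E × ℝ → ℝ} (hφ : IsTest φ) (t : ℝ) : IsTest fun y => φ (y, t) :=
  ⟨hφ.contDiff.comp (contDiff_prodMk_left t),
    .intro (hφ.hasCompactSupport.isCompact.image continuous_fst) fun y hy =>
      image_eq_zero_of_notMem_tsupport fun hmem => hy ⟨(y, t), hmem, rfl⟩⟩

theorem IsTest.fst_mul_snd {ζ : E → ℝ} {g : ℝ → ℝ} (hζ : IsTest ζ) (hg : IsTest g) :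
    IsTest fun q : E × ℝ => ζ q.1 * g q.2 := by
  refine ⟨(hζ.contDiff.comp contDiff_fst).mul (hg.contDiff.comp contDiff_snd),
    .intro (hζ.hasCompactSupport.isCompact.prod hg.hasCompactSupport.isCompact) fun q hq => ?_⟩
  rw [mem_prod, not_and_or] at hq
  rcases hq with hq | hq <;> simp [image_eq_zero_of_notMem_tsupport hq]

variable [MeasurableSpace E] [BorelSpace E] {ν : Measure E}

theorem levyOp_map_prodMk_zero {φ : E × ℝ → ℝ} (hφ : IsTest φ) (x : E) (t : ℝ) :
    levyOp (ν.map fun y => (y, (0 : ℝ))) (0, 1) φ (x, t) =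
      (∫ y, secondDiff (fun y => φ (y, t)) x y ∂ν) / 2 + deriv (fun τ => φ (x, τ)) t := by
  have hderiv : HasDerivAt (fun τ => φ (x, τ)) (fderiv ℝ φ (x, t) (0, 1)) t :=
    (hφ.differentiable (x, t)).hasFDerivAt.comp_hasDerivAt t
      ((hasDerivAt_const t x).prodMk (hasDerivAt_id t))
  rw [levyOp, hderiv.deriv, integral_map measurable_prodMk_right.aemeasurable]
  · simp only [secondDiff, Prod.mk_add_mk, Prod.mk_sub_mk, add_zero, sub_zero]
  · exact ((continuous_secondDiff hφ.continuous).comp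
      (Continuous.prodMk_right (x, t))).aestronglyMeasurable

end SpaceTime

/-- The measure `c * ‖y‖ ^ (-a) dy`; for `a = n + 2 * s` and `c = C(n, s)` it is the jump measure of
the fractional Laplacian of order `s`. The value of `0 ^ (-a)` is immaterial in positive
dimension. -/
noncomputable def rieszMeasure {E : Type*} [NormedAddCommGroup E] [MeasurableSpace E]
    (m : Measure E) (c a : ℝ) : Measure E :=
  m.withDensity fun y => ENNReal.ofReal (c * ‖y‖ ^ (-a))

section RieszMeasure

variable {E : Type*} [NormedAddCommGroup E] [MeasurableSpace E] {m : Measure E} {c a : ℝ}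

instance [SFinite m] : SFinite (rieszMeasure m c a) := by
  unfold rieszMeasure
  infer_instance

variable [BorelSpace E]

theorem measurable_rieszDensity : Measurable fun y : E => ENNReal.ofReal (c * ‖y‖ ^ (-a)) := by
  fun_prop

theorem integral_rieszMeasure (hc : 0 ≤ c) (f : E → ℝ) :
    ∫ y, f y ∂rieszMeasure m c a = c * ∫ y, f y * ‖y‖ ^ (-a) ∂m := by
  rw [rieszMeasure, integral_withDensity_eq_integral_toReal_smul measurable_rieszDensity (by simp),
    ← integral_const_mul]
  refine integral_congr_ae (.of_forall fun y => ?_)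
  simp only
  rw [ENNReal.toReal_ofReal (by positivity), smul_eq_mul]
  ring

theorem setIntegral_rieszMeasure (hc : 0 ≤ c) (f : E → ℝ) {S : Set E} (hS : MeasurableSet S) :
    ∫ y in S, f y ∂rieszMeasure m c a = c * ∫ y in S, f y / ‖y‖ ^ a ∂m := by
  rw [← integral_indicator hS, integral_rieszMeasure hc, ← integral_indicator hS]
  congr 1
  refine integral_congr_ae (.of_forall fun y => ?_)
  simp only [Real.rpow_neg (norm_nonneg y), div_eq_mul_inv]
  exact (indicator_mul_left S f fun y => (‖y‖ ^ a)⁻¹).symm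

instance [m.IsNegInvariant] : (rieszMeasure m c a).IsNegInvariant where
  neg_eq_self := by
    ext S hS
    rw [Measure.neg_apply, rieszMeasure, withDensity_apply _ hS.neg, withDensity_apply _ hS]
    have h := (Measure.measurePreserving_neg m).setLIntegral_comp_preimage hS
      (measurable_rieszDensity (c := c) (a := a))
    simpa using! h

variable [NormedSpace ℝ E] [m.IsAddHaarMeasure] [Nontrivial E]

theorem rieszMeasure_norm_gt_pos (hc : 0 < c) {d : ℝ} (hd : 0 < d)
    (hν : IsLevy (rieszMeasure m c a)) : 0 < (rieszMeasure m c a).real {y | d < ‖y‖} := by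
  have hsub : {y : E | d < ‖y‖} ⊆ {y | d ≤ ‖y‖} := fun y (hy : d < ‖y‖) => hy.le
  have hfin := ((measure_mono hsub).trans_lt (IsLevy.measure_norm_ge_lt_top hν hd)).ne
  refine ENNReal.toReal_pos (fun hzero => ?_) hfin
  rw [rieszMeasure, withDensity_apply_eq_zero' measurable_rieszDensity.aemeasurable,
    inter_eq_right.2] at hzero
  · have hopen : IsOpen {y : E | d < ‖y‖} := isOpen_lt continuous_const continuous_norm
    exact (hopen.measure_pos m (NormedSpace.exists_lt_norm ℝ E d)).ne' hzero
  · intro y hy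
    have hy' : 0 < ‖y‖ := hd.trans hy
    exact (ENNReal.ofReal_pos.2 (by positivity)).ne'

variable [FiniteDimensional ℝ E]

theorem integrable_min_norm_sq_one_mul_norm_rpow (ha : Module.finrank ℝ E < a)
    (ha' : a < Module.finrank ℝ E + 2) :
    Integrable (fun y : E => min (‖y‖ ^ 2) 1 * ‖y‖ ^ (-a)) m := by
  have hdim : ((Module.finrank ℝ E - 1 : ℕ) : ℝ) = Module.finrank ℝ E - 1 := by
    rw [Nat.cast_sub Module.finrank_pos, Nat.cast_one]
  have hmin_small : ∀ r ∈ Ioc (0 : ℝ) 1, min (r ^ 2) 1 = r ^ 2 := fun r hr =>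
    min_eq_left (pow_le_one₀ hr.1.le hr.2)
  have hmin_large : ∀ r ∈ Ioi (1 : ℝ), min (r ^ 2) 1 = 1 := fun r hr =>
    min_eq_right (one_le_pow₀ (mem_Ioi.1 hr).le)
  rw [integrable_fun_norm_addHaar m (f := fun r : ℝ => min (r ^ 2) 1 * r ^ (-a)),
    ← Ioc_union_Ioi_eq_Ioi zero_le_one, integrableOn_union]
  constructor
  · refine (intervalIntegral.intervalIntegrable_rpow' (a := 0) (b := 1)
      (r := Module.finrank ℝ E + 1 - a) (by linarith)).1.congr_fun (fun r hr => ?_)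
      measurableSet_Ioc
    simp only [hmin_small r hr]
    rw [← Real.rpow_natCast r (_ - 1), ← Real.rpow_natCast r 2, ← Real.rpow_add hr.1, smul_eq_mul,
      ← Real.rpow_add hr.1, hdim]
    congr 1
    push_cast
    ring
  · refine (integrableOn_Ioi_rpow_of_lt (a := Module.finrank ℝ E - 1 - a) (by linarith)
      one_pos).congr_fun (fun r hr => ?_) measurableSet_Ioi
    simp only [hmin_large r hr]
    rw [one_mul, ← Real.rpow_natCast r (_ - 1), smul_eq_mul,
      ← Real.rpow_add (one_pos.trans (mem_Ioi.1 hr)), hdim, sub_eq_add_neg]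

theorem isLevy_rieszMeasure (hc : 0 ≤ c) (ha : Module.finrank ℝ E < a)
    (ha' : a < Module.finrank ℝ E + 2) : IsLevy (rieszMeasure m c a) := by
  rw [IsLevy, rieszMeasure, integrable_withDensity_iff_integrable_smul' measurable_rieszDensity
    (by simp)]
  refine ((integrable_min_norm_sq_one_mul_norm_rpow ha ha').const_mul c).congr
    (.of_forall fun y => ?_)
  simp only
  rw [ENNReal.toReal_ofReal (by positivity), smul_eq_mul]
  ring

end RieszMeasure

section FractionalHeatOperator

theorem norm_sq_rpow_neg_div_two {E : Type*} [SeminormedAddCommGroup E] (z : E) (a : ℝ) :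
    (‖z‖ ^ 2) ^ (-a / 2) = ‖z‖ ^ (-a) := by
  rw [← Real.rpow_natCast, ← Real.rpow_mul (norm_nonneg z)]
  congr 1
  push_cast
  ring

variable {E : Type*} [NormedAddCommGroup E] [InnerProductSpace ℝ E] [FiniteDimensional ℝ E]
  [MeasurableSpace E] [BorelSpace E] {m : Measure E} [m.IsAddHaarMeasure] {c a r : ℝ}

theorem integral_secondDiff_rieszMeasure_of_exterior (hc : 0 ≤ c)
    (hν : IsLevy (rieszMeasure m c a)) {ζ : E → ℝ} (hζ : IsTest ζ)
    (hsupp : tsupport ζ ⊆ {y | r < ‖y‖}) {x : E} (hx : ‖x‖ < r) :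
    (∫ y, secondDiff ζ x y ∂rieszMeasure m c a) / 2 =
      -(c * ∫ y, ζ y * (‖y - x‖ ^ 2) ^ (-a / 2) ∂m) := by
  have hzero : ∀ y ∈ ball x (r - ‖x‖), ζ y = 0 := fun y hy => by
    refine image_eq_zero_of_notMem_tsupport fun hmem => ?_
    have hlt : r < ‖y‖ := hsupp hmem
    linarith [norm_sub_norm_le y x, mem_ball_iff_norm.1 hy]
  rw [hζ.integral_secondDiff_of_eq_zero_on_ball hν (sub_pos.2 hx) hzero, integral_rieszMeasure hc,
    ← integral_add_left_eq_self (fun y => ζ y * _) x]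
  simp only [add_sub_cancel_left, norm_sq_rpow_neg_div_two]

theorem exists_isTest_eq_exp (τ r : ℝ) :
    ∃ g : ℝ → ℝ, IsTest g ∧ ∀ t, |t| ≤ r → g t = Real.exp (τ * t) := by
  let χ : ContDiffBump (0 : ℝ) := ⟨max r 1, max r 1 + 1, by positivity, by linarith⟩
  refine ⟨fun t => χ t * Real.exp (τ * t),
    ⟨χ.contDiff.mul (by fun_prop), χ.hasCompactSupport.mul_right⟩, fun t ht => ?_⟩
  simp only [χ.one_of_mem_closedBall (x := t)
    (mem_closedBall_zero_iff.2 (ht.trans (le_max_left r 1))), one_mul]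

theorem levyOp_mul_of_exterior (hc : 0 ≤ c) (hν : IsLevy (rieszMeasure m c a)) {ζ : E → ℝ}
    (hζ : IsTest ζ) (hsupp : tsupport ζ ⊆ {y | r < ‖y‖}) {g : ℝ → ℝ} (hg : IsTest g) {x : E}
    (hx : ‖x‖ < r) (t : ℝ) :
    levyOp ((rieszMeasure m c a).map fun y => (y, (0 : ℝ))) (0, 1)
      (fun q : E × ℝ => ζ q.1 * g q.2) (x, t) =
        -c * (g t * ∫ y, ζ y * (‖y - x‖ ^ 2) ^ (-a / 2) ∂m) := by
  have hx₀ : ζ x = 0 := image_eq_zero_of_notMem_tsupport fun hmem => lt_asymm hx (hsupp hmem)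
  have hslice : ∀ y, secondDiff (fun y => ζ y * g t) x y = secondDiff ζ x y * g t := fun y => by
    simp only [secondDiff]
    ring
  rw [levyOp_map_prodMk_zero (hζ.fst_mul_snd hg)]
  simp only [hslice, hx₀, zero_mul, deriv_const, add_zero]
  rw [integral_mul_const, mul_div_right_comm,
    integral_secondDiff_rieszMeasure_of_exterior hc hν hζ hsupp hx]
  ring

theorem exists_strongDual_prod_real_eq {E : Type*} [NormedAddCommGroup E] [InnerProductSpace ℝ E]
    [CompleteSpace E] (ℓ : StrongDual ℝ (E × ℝ)) :
    ∃ (η : E) (τ : ℝ), ∀ q, ℓ q = τ * q.2 + ⟪η, q.1⟫_ℝ := by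
  refine ⟨(InnerProductSpace.toDual ℝ E).symm (ℓ.comp (.inl ℝ E ℝ)), ℓ (0, 1), fun q => ?_⟩
  have hq : q = q.2 • ((0, 1) : E × ℝ) + (q.1, 0) := by simp
  conv_lhs => rw [hq, map_add, map_smul, smul_eq_mul]
  rw [InnerProductSpace.toDual_symm_apply, mul_comm]
  rfl

variable {μ : Measure (E × ℝ)} {Ω : Set (E × ℝ)}

theorem integral_mul_exp_mul_exp_inner_eq_zero [Nontrivial E] [SFinite μ] (hc : 0 < c)
    (ha : Module.finrank ℝ E < a) (ha' : a < Module.finrank ℝ E + 2) (hΩm : MeasurableSet Ω)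
    (hΩ : ∀ q ∈ Ω, ‖q‖ < r) {ψ : E × ℝ → ℝ} (τ : ℝ)
    (hψ : IntegrableOn (fun q => ψ q * Real.exp (τ * q.2)) Ω μ)
    (h : ∀ w, IsTest w → (∀ q ∈ Ω, w q = 0) → ∫ q in Ω, ψ q *
      levyOp ((rieszMeasure m c a).map fun y => (y, (0 : ℝ))) (0, 1) w q ∂μ = 0) (η : E) :
    ∫ q in Ω, ψ q * Real.exp (τ * q.2) * Real.exp ⟪η, q.1⟫_ℝ ∂μ = 0 := by
  have hX : ∀ᵐ q ∂μ.restrict Ω, ‖q.1‖ < r :=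
    (ae_restrict_iff' hΩm).2 (.of_forall fun q hq => (norm_fst_le q).trans_lt (hΩ q hq))
  obtain ⟨g, hg, hgexp⟩ := exists_isTest_eq_exp τ r
  refine integral_mul_exp_inner_eq_zero hψ measurable_fst hX (e := -a / 2) (by linarith)
    (by linarith) (integral_mul_comp_sub_eq_zero_of_weak (m := m) hψ measurable_fst hX
      (by fun_prop) (contDiffOn_norm_sq_rpow _) fun ζ hζ hsupp => ?_) η
  have hvanish : ∀ q ∈ Ω, ζ q.1 * g q.2 = 0 := fun q hq => by
    rw [image_eq_zero_of_notMem_tsupport fun hmem =>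
      lt_asymm ((norm_fst_le q).trans_lt (hΩ q hq)) (hsupp hmem), zero_mul]
  have htest := h _ (hζ.fst_mul_snd hg) hvanish
  rw [← mul_eq_zero_iff_left (neg_ne_zero.2 hc.ne'), ← htest, ← integral_const_mul]
  refine setIntegral_congr_fun hΩm fun q hq => ?_
  rw [levyOp_mul_of_exterior hc.le (isLevy_rieszMeasure hc.le ha ha') hζ hsupp hg
    ((norm_fst_le q).trans_lt (hΩ q hq)), hgexp q.2 ((norm_snd_le q).trans (hΩ q hq).le)]
  ring

theorem hasUniqueContinuation_rieszMeasure [Nontrivial E] [IsFiniteMeasureOnCompacts μ]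
    (hc : 0 < c) (ha : Module.finrank ℝ E < a) (ha' : a < Module.finrank ℝ E + 2)
    (hΩm : MeasurableSet Ω) (hΩ : Bornology.IsBounded Ω) :
    HasUniqueContinuation ((rieszMeasure m c a).map fun y => (y, (0 : ℝ))) (0, 1) Ω μ := by
  intro ψ hψ h
  obtain ⟨r, -, hr⟩ := hΩ.exists_pos_norm_lt
  have : IsFiniteMeasure (μ.restrict Ω) := ⟨by simpa using hΩ.measure_lt_top⟩
  have hmul : ∀ f : E × ℝ → ℝ, Continuous f → Integrable (fun q => ψ q * f q) (μ.restrict Ω) :=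
    fun f hf => hψ.integrable_mul (memLp_restrict_of_continuous hΩ hf)
  refine ae_eq_zero_of_forall_integral_mul_exp_eq_zero
    (fun ℓ => hmul _ (by fun_prop)) fun ℓ => ?_
  obtain ⟨η, τ, hℓ⟩ := exists_strongDual_prod_real_eq ℓ
  simp only [hℓ, Real.exp_add, ← mul_assoc]
  exact integral_mul_exp_mul_exp_inner_eq_zero hc ha ha' hΩm hr _ (hmul _ (by fun_prop)) h η

end FractionalHeatOperator

section LogisticEquation

variable {n : ℕ} {s : ℝ}

theorem fracC_pos (n : ℕ) (hs : s ∈ Ioo (0 : ℝ) 1) : 0 < fracC n s := by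
  obtain ⟨hs₀, hs₁⟩ := hs
  have : 0 < Real.Gamma ((n : ℝ) / 2 + s) := Real.Gamma_pos_of_pos (by positivity)
  have : 0 < Real.Gamma (1 - s) := Real.Gamma_pos_of_pos (by linarith)
  unfold fracC
  positivity

theorem hasFracLap_of_isTest [NeZero n] (hs : s ∈ Ioo (0 : ℝ) 1)
    {v : EuclideanSpace ℝ (Fin n) → ℝ} (hv : IsTest v) (x : EuclideanSpace ℝ (Fin n)) :
    HasFracLap n s v x
      ((∫ y, secondDiff v x y ∂rieszMeasure volume (fracC n s) (n + 2 * s)) / 2) := by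
  have hc := (fracC_pos n hs).le
  have hν : IsLevy (rieszMeasure (volume : Measure (EuclideanSpace ℝ (Fin n))) (fracC n s)
    (n + 2 * s)) := isLevy_rieszMeasure hc (by simpa using hs.1) (by simpa using hs.2)
  refine (hv.tendsto_setIntegral_sub_translate hν x).congr fun ρ => ?_
  exact setIntegral_rieszMeasure hc _ (measurableSet_le measurable_const measurable_norm)

theorem exists_isTest_fractional_caloric_near [NeZero n] (hs : s ∈ Ioo (0 : ℝ) 1) {k : ℕ}
    {σ : EuclideanSpace ℝ (Fin n) × ℝ → ℝ} (hσ : ContDiffOn ℝ k σ (closedBall 0 1)) {ε : ℝ}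
    (hε : 0 < ε) :
    ∃ U : EuclideanSpace ℝ (Fin n) × ℝ → ℝ, IsTest U ∧
      (∀ x t, (x, t) ∈ ball (0 : EuclideanSpace ℝ (Fin n) × ℝ) 1 →
        HasFracLap n s (fun y => U (y, t)) x (-deriv (fun τ => U (x, τ)) t)) ∧
      ∀ i ≤ k, ∀ p ∈ ball (0 : EuclideanSpace ℝ (Fin n) × ℝ) 1,
        ‖iteratedFDeriv ℝ i (fun q => σ q - U q) p‖ ≤ ε := by
  have hc := fracC_pos n hs
  have ha : (Module.finrank ℝ (EuclideanSpace ℝ (Fin n)) : ℝ) < n + 2 * s := by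
    simpa using hs.1
  have ha' : n + 2 * s < Module.finrank ℝ (EuclideanSpace ℝ (Fin n)) + 2 := by
    simpa using hs.2
  have hν := isLevy_rieszMeasure (m := volume) hc.le ha ha'
  have hjump : 0 < ((rieszMeasure (volume : Measure (EuclideanSpace ℝ (Fin n))) (fracC n s)
      (n + 2 * s)).map fun y => (y, (0 : ℝ))).real
        {v | diam (ball (0 : EuclideanSpace ℝ (Fin n) × ℝ) 2) < ‖v‖} := by
    rw [measureReal_map_prodMk_zero_norm_gt, diam_ball_eq _ zero_le_two]
    exact rieszMeasure_norm_gt_pos hc (by norm_num) hν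
  have hvol : (volume : Measure (EuclideanSpace ℝ (Fin n) × ℝ)).IsAddHaarMeasure :=
    Measure.prod.instIsAddHaarMeasure volume volume
  obtain ⟨U, hU, hsol, hnear⟩ := exists_isTest_levyOp_eq_zero_near hν.map_prodMk_zero hjump
    (hasUniqueContinuation_rieszMeasure (μ := volume) hc ha ha' measurableSet_ball
      isBounded_ball) hσ hε
  refine ⟨U, hU, fun x t hxt => ?_, hnear⟩
  have hzero := hsol _ hxt
  rw [levyOp_map_prodMk_zero hU] at hzero
  rw [← eq_neg_of_add_eq_zero_left hzero]
  exact hasFracLap_of_isTest hs (hU.comp_prodMk t) x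

theorem closedBall_prod_Icc_eq_closedBall {E : Type*} [SeminormedAddCommGroup E] (r : ℝ) :
    closedBall (0 : E) r ×ˢ Icc (-r) r = closedBall (0 : E × ℝ) r := by
  rw [← Prod.mk_zero_zero, ← closedBall_prod_same, Real.closedBall_eq_Icc, zero_sub, zero_add]

theorem ball_prod_Ioo_eq_ball {E : Type*} [SeminormedAddCommGroup E] (r : ℝ) :
    ball (0 : E) r ×ˢ Ioo (-r) r = ball (0 : E × ℝ) r := by
  rw [← Prod.mk_zero_zero, ← ball_prod_same, Real.ball_eq_Ioo, zero_sub, zero_add]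

end LogisticEquation

end FractionalHeat

/-- Exhaustion of a slightly modified resource by a population satisfying a nonlocal
logistic equation: given a positive resource `σ ∈ C^k(closure B₁ × [-1,1])` and `ε > 0`,
there are positive (in `B₁ × (-1,1)`) functions `u_ε, σ_ε`, smooth in `B₁ × (-1,1)`,
continuous and compactly supported in `ℝ^{n+1}`, with
`∂ₜ u_ε + (-Δ)ˢ u_ε = (σ_ε - u_ε) u_ε` and `u_ε = σ_ε` in `B₁ × (-1,1)`, and
`‖σ - σ_ε‖_{C^k(B₁ × (-1,1))} ≤ ε`. -/
theorem population_exhausts_modified_resource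
    (n : ℕ) (hn : 1 ≤ n) (s : ℝ) (hs : s ∈ Set.Ioo (0 : ℝ) 1) (k : ℕ) (ε : ℝ) (hε : 0 < ε)
    (σ : EuclideanSpace ℝ (Fin n) × ℝ → ℝ)
    (hσ : ContDiffOn ℝ k σ (Metric.closedBall 0 1 ×ˢ Set.Icc (-1 : ℝ) 1))
    (hσpos : ∀ p ∈ Metric.closedBall (0 : EuclideanSpace ℝ (Fin n)) 1 ×ˢ Set.Icc (-1 : ℝ) 1,
      0 < σ p) :
    ∃ u σε : EuclideanSpace ℝ (Fin n) × ℝ → ℝ,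
      Continuous u ∧ HasCompactSupport u ∧ Continuous σε ∧ HasCompactSupport σε ∧
      ContDiffOn ℝ (⊤ : ℕ∞) u (Metric.ball 0 1 ×ˢ Set.Ioo (-1 : ℝ) 1) ∧
      ContDiffOn ℝ (⊤ : ℕ∞) σε (Metric.ball 0 1 ×ˢ Set.Ioo (-1 : ℝ) 1) ∧
      (∀ p ∈ Metric.ball (0 : EuclideanSpace ℝ (Fin n)) 1 ×ˢ Set.Ioo (-1 : ℝ) 1,
        0 < u p ∧ 0 < σε p) ∧
      -- (1) the nonlocal logistic equation `∂ₜ u + (-Δ)ˢ u = (σ_ε - u) u` in `B₁ × (-1,1)`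
      (∀ x ∈ Metric.ball (0 : EuclideanSpace ℝ (Fin n)) 1, ∀ t ∈ Set.Ioo (-1 : ℝ) 1,
        HasFracLap n s (fun y => u (y, t)) x
          ((σε (x, t) - u (x, t)) * u (x, t) - deriv (fun τ => u (x, τ)) t)) ∧
      -- (2) the population exhausts the resource
      (∀ p ∈ Metric.ball (0 : EuclideanSpace ℝ (Fin n)) 1 ×ˢ Set.Ioo (-1 : ℝ) 1,
        u p = σε p) ∧
      -- (3) the resource is only slightly modified
      (∀ i ≤ k, ∀ p ∈ Metric.ball (0 : EuclideanSpace ℝ (Fin n)) 1 ×ˢ Set.Ioo (-1 : ℝ) 1,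
        ‖iteratedFDeriv ℝ i (fun q => σ q - σε q) p‖ ≤ ε) := by
  have : NeZero n := ⟨by omega⟩
  rw [FractionalHeat.closedBall_prod_Icc_eq_closedBall] at hσ hσpos
  rw [FractionalHeat.ball_prod_Ioo_eq_ball]
  obtain ⟨δ, hδ, hδσ⟩ := (isCompact_closedBall 0 1).exists_forall_le' hσ.continuousOn hσpos
  obtain ⟨U, hU, hsol, hnear⟩ := FractionalHeat.exists_isTest_fractional_caloric_near hs hσ
    (lt_min hε (half_pos hδ))
  have hpos : ∀ p ∈ ball (0 : EuclideanSpace ℝ (Fin n) × ℝ) 1, 0 < U p := fun p hp => by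
    have hclose := (hnear 0 k.zero_le p hp).trans (min_le_right _ _)
    rw [norm_iteratedFDeriv_zero, Real.norm_eq_abs] at hclose
    linarith [le_abs_self (σ p - U p), hδσ p (ball_subset_closedBall hp)]
  refine ⟨U, U, hU.continuous, hU.hasCompactSupport, hU.continuous, hU.hasCompactSupport,
    hU.contDiff.contDiffOn, hU.contDiff.contDiffOn, fun p hp => ⟨hpos p hp, hpos p hp⟩,
    fun x hx t ht => ?_, fun _ _ => rfl,
    fun i hi p hp => (hnear i hi p hp).trans (min_le_left _ _)⟩
  rw [sub_self, zero_mul, zero_sub]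
  exact hsol x t (FractionalHeat.ball_prod_Ioo_eq_ball (E := EuclideanSpace ℝ (Fin n)) 1 ▸
    ⟨hx, ht⟩)
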